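/- For every odd integer r ≥ 3 and every integer Δ ≥ 2, setting Δ′ = ⌈(r+1)Δ/r⌉, there exists a constant C = C(r,Δ) > 0 such that for every n ≥ 1 there is an r-uniform hypergraph that is universal for 𝓕^(r)(n,Δ), has at most C·n vertices, and has at most C·n^{r − (r+1)/Δ′} edges. -/

import Mathlib

/-!
The construction is driven by *traversals*. Suppose that every hypergraph `F` of the family comes
with functions `τ i : V(F) → ℕ`, `i < N`, with bounded fibres, and that every edge `e` has sets
`S i`, of total size `∑ i, |S i| ≤ K`, such that for each `i` every vertex of `e` has
`τ i`-distance at most `1` from some member of `S i`. Then there is a universal hypergraph with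
`O(n)` vertices and `O(n^{K/N})` edges (`universal_of_traversals`). The host has vertex set
`(Fin N → Fin m) × Fin C₀` with `m = O(n^{1/N})`, where `Fin m` carries a fixed expander of bounded
degree. A hypergraph `F` is embedded by letting the `i`-th coordinate of the image of `v` be the
position at time `τ i v` of a walk in the expander. Vertices at `τ i`-distance at most `1` receive
equal or adjacent `i`-th coordinates, so the image of an edge is determined by at most `K` elements
of `Fin m`, up to boundedly many choices; the host edges are all the sets described in this way.

The walks must make the product map have bounded fibres, so each coordinate has to split every
fibre of the previous coordinates evenly over `Fin m` (`exists_coordinate`). The walk is built in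
segments of logarithmic length, each avoiding the vertices that already carry too much load.
In an expander with labelled out-neighbours, the set of vertices from which a segment cannot avoid
small forbidden sets is itself small (`card_blocked_lt`), and from any other vertex so many
endpoints are reachable (`bfs`) that one of them is a good start for the next segment
(`long_walk`). For the goodness of an endpoint not to depend on the segment leading to it, loads
are counted only up to the beginning of the preceding segment. The expander comes from a counting
argument (`exists_expander`).

It remains to find traversals with `K / N ≤ r - (r + 1) / Δ'`, with two constructions based on
König's edge colouring theorem (`konig`).

* If `r Δ' = (r + 1) Δ`, then `r ∣ Δ`, say `r = 2h + 1` and `Δ = r q`. Label the vertices of each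
  edge by `0, …, 2h` so that each label occurs at most `q` times at each vertex. In each edge draw
  the arcs `0 → 1` and `2j - 1 → 2j` for `1 ≤ j ≤ h`: they cover the edge, and the in- and
  out-degrees are at most `N = q (h + 1)`. Colour the arcs with `N` colours, so that each colour
  class is part of a permutation `p`. Folding each cycle of `p` onto a segment gives `τ` with
  fibres of size at most `2` and with `v`, `p v` always at `τ`-distance at most `1`
  (`exists_fold`). Each of the `h + 1` arcs of an edge then makes one vertex redundant in its
  colour: `K = r N - (h + 1)`.
* Otherwise `(r + 1) Δ + 1 ≤ r Δ'`. Colour the incidences `(e, v)` with `Δ` colours so that those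
  at a common vertex have distinct colours and no edge is monochromatic. Colour `i` then defines
  a partial function sending `v` to its cyclic successor in the edge `e` with `(e, v)` of
  colour `i`. Its functional graph, cut at all vertices whose depth lies in a fixed class modulo
  `L = r Δ'`, has bounded components, and `τ` is an index of the component (`exists_cut`). With the
  `Δ L` pairs (colour, class) as indices, an uncut incidence of the given colour makes `v`
  redundant, as `v` shares its component with its successor. Hence `K = r ((Δ - 1) L + 1)`.
-/

/-- `EH` (a set of edges on the vertex set `Fin N`) is the edge set of an `r`-uniform
hypergraph that is universal for the family `𝓕^(r)(n,Δ)` of `r`-uniform hypergraphs with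
at most `n` vertices and maximum vertex degree at most `Δ`. -/
def HypergraphUniversal (r n Δ N : ℕ) (EH : Finset (Finset (Fin N))) : Prop :=
  ∀ EF : Finset (Finset (Fin n)),
    (∀ e ∈ EF, e.card = r) →
    (∀ v : Fin n, (EF.filter (fun e => v ∈ e)).card ≤ Δ) →
    ∃ φ : Fin n → Fin N, Function.Injective φ ∧ ∀ e ∈ EF, e.image φ ∈ EH

namespace UnivHyp

/-! ### Expanders by counting -/

lemma choose_le_three (m k : ℕ) (hk : 1 ≤ k) :
    (m.choose k : ℝ) ≤ (3 * (m / k)) ^ k := by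
  have hk0 : (0 : ℝ) < k := by exact_mod_cast hk
  have h1 : (m.choose k : ℝ) ≤ (m : ℝ) ^ k / (k.factorial : ℝ) := Nat.choose_le_pow_div k m
  have h2 : (k : ℝ) ^ k / (k.factorial : ℝ) ≤ 3 ^ k := by
    refine (Real.pow_div_factorial_le_exp (k : ℝ) hk0.le k).trans ?_
    have : Real.exp (k : ℝ) = Real.exp 1 ^ k := by rw [← Real.exp_nat_mul]; simp
    rw [this]
    exact pow_le_pow_left₀ (Real.exp_pos 1).le
      (le_of_lt (lt_trans Real.exp_one_lt_d9 (by norm_num))) k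
  have h3 : (m : ℝ) ^ k / (k.factorial : ℝ)
      = ((m : ℝ) / k) ^ k * ((k : ℝ) ^ k / (k.factorial : ℝ)) := by
    rw [div_pow]; field_simp
  rw [mul_pow, mul_comm]
  refine h1.trans ?_
  rw [h3]
  exact mul_le_mul_of_nonneg_left h2 (by positivity)

/-- At most `4096 (|S| m)⁶` of the `12`-tuples over `Fin m` have at least six entries in `S`. -/
lemma card_half_in (m : ℕ) (S : Finset (Fin m)) :
    (Finset.univ.filter (fun h : Fin 12 → Fin m =>
      6 ≤ (Finset.univ.filter (fun i => h i ∈ S)).card)).card ≤ 4096 * (S.card ^ 6 * m ^ 6) := by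
  classical
  have hsub : (Finset.univ.filter (fun h : Fin 12 → Fin m =>
      6 ≤ (Finset.univ.filter (fun i => h i ∈ S)).card)) ⊆
      ((Finset.univ : Finset (Fin 12)).powersetCard 6).biUnion
        (fun I => Fintype.piFinset (fun i => if i ∈ I then S else Finset.univ)) := by
    intro h hh
    simp only [Finset.mem_filter, Finset.mem_univ, true_and] at hh
    obtain ⟨I, hI, hIc⟩ := Finset.exists_subset_card_eq hh
    simp only [Finset.mem_biUnion, Finset.mem_powersetCard, Fintype.mem_piFinset]
    refine ⟨I, ⟨Finset.subset_univ _, hIc⟩, fun i => ?_⟩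
    split_ifs with hi
    · have := hI hi
      simpa using this
    · simp
  refine (Finset.card_le_card hsub).trans (Finset.card_biUnion_le.trans ?_)
  have : ∀ I ∈ ((Finset.univ : Finset (Fin 12)).powersetCard 6),
      (Fintype.piFinset (fun i => if i ∈ I then S else Finset.univ)).card
        ≤ S.card ^ 6 * m ^ 6 := by
    intro I hI
    rw [Finset.mem_powersetCard] at hI
    rw [Fintype.card_piFinset]
    have : ∀ i, (if i ∈ I then S else (Finset.univ : Finset (Fin m))).card
        = if i ∈ I then S.card else m := by
      intro i; split_ifs <;> simp
    simp only [this]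
    rw [Finset.prod_ite]
    simp only [Finset.prod_const]
    have e1 : (Finset.univ.filter (fun i => i ∈ I)).card = 6 := by
      rw [← hI.2]; congr 1; ext; simp
    have e2 : (Finset.univ.filter (fun i => i ∉ I)).card = 6 := by
      have := Finset.card_filter_add_card_filter_not (s := (Finset.univ : Finset (Fin 12)))
        (fun i => i ∈ I)
      rw [e1] at this
      simp only [Finset.card_univ, Fintype.card_fin] at this
      omega
    rw [e1, e2]
  refine (Finset.sum_le_card_nsmul _ _ _ this).trans ?_
  rw [Finset.card_powersetCard, smul_eq_mul]
  refine Nat.mul_le_mul_right _ ?_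
  simp [Nat.choose]

lemma card_bad (m : ℕ) (T S : Finset (Fin m)) :
    (Finset.univ.filter (fun g : Fin m → Fin 12 → Fin m =>
      ∀ w ∈ T, 6 ≤ (Finset.univ.filter (fun i => g w i ∈ S)).card)).card
      ≤ (4096 * (S.card ^ 6 * m ^ 6)) ^ T.card * (m ^ 12) ^ (m - T.card) := by
  classical
  have hsub : (Finset.univ.filter (fun g : Fin m → Fin 12 → Fin m =>
      ∀ w ∈ T, 6 ≤ (Finset.univ.filter (fun i => g w i ∈ S)).card)) ⊆
      Fintype.piFinset (fun w => if w ∈ T then (Finset.univ.filter (fun h : Fin 12 → Fin m =>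
      6 ≤ (Finset.univ.filter (fun i => h i ∈ S)).card)) else Finset.univ) := by
    intro g hg
    simp only [Finset.mem_filter, Finset.mem_univ, true_and] at hg
    rw [Fintype.mem_piFinset]
    intro w
    split_ifs with hw
    · simpa using hg w hw
    · simp
  refine (Finset.card_le_card hsub).trans ?_
  rw [Fintype.card_piFinset]
  have : ∀ w ∈ (Finset.univ : Finset (Fin m)), (if w ∈ T then (Finset.univ.filter (fun h : Fin 12 → Fin m =>
      6 ≤ (Finset.univ.filter (fun i => h i ∈ S)).card)) else Finset.univ).card
        ≤ if w ∈ T then 4096 * (S.card ^ 6 * m ^ 6) else m ^ 12 := by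
    intro w _
    split_ifs
    · exact card_half_in m S
    · simp
  refine (Finset.prod_le_prod (fun _ _ => Nat.zero_le _) this).trans ?_
  rw [Finset.prod_ite]
  simp only [Finset.prod_const]
  have e1 : (Finset.univ.filter (fun i => i ∈ T)).card = T.card := by
    congr 1; ext; simp
  have e2 : (Finset.univ.filter (fun i => i ∉ T)).card = m - T.card := by
    have := Finset.card_filter_add_card_filter_not (s := (Finset.univ : Finset (Fin m)))
      (fun i => i ∈ T)
    rw [e1] at this
    simp only [Finset.card_univ, Fintype.card_fin] at this
    omega
  rw [e1, e2]

/-- The union bound over all pairs of sets of sizes `t` and `4 t`, relative to the number of all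
digraphs of out-degree `12` on `m` vertices: such pairs violate expansion with probability at
most `2⁻ᵗ`. -/
lemma term_bound (m t : ℕ) (ht : 1 ≤ t) (hm : 2 ^ 25 * t ≤ m) :
    (m.choose t : ℝ) * (m.choose (4 * t)) *
      ((4096 * (((4 * t : ℕ) : ℝ) ^ 6 * (m : ℝ) ^ 6)) ^ t * ((m : ℝ) ^ 12) ^ (m - t))
      ≤ (1 / 2) ^ t * ((m : ℝ) ^ 12) ^ m := by
  have ht0 : (0 : ℝ) < t := by exact_mod_cast ht
  have hm' : (2 : ℝ) ^ 25 * t ≤ m := by exact_mod_cast hm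
  have hm0 : (0 : ℝ) < m := by nlinarith
  have htm : t ≤ m := by nlinarith
  have hc1 := choose_le_three m t ht
  have hc2 := choose_le_three m (4 * t) (by omega)
  have hsplit : ((m : ℝ) ^ 12) ^ m = ((m : ℝ) ^ 12) ^ t * ((m : ℝ) ^ 12) ^ (m - t) := by
    rw [← pow_add]; congr 1; omega
  rw [hsplit, ← mul_assoc ((m.choose t : ℝ) * (m.choose (4 * t))), ← mul_assoc ((1 / 2 : ℝ) ^ t)]
  have hp : (0 : ℝ) ≤ ((m : ℝ) ^ 12) ^ (m - t) := by positivity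
  refine mul_le_mul_of_nonneg_right ?_ hp
  calc (m.choose t : ℝ) * (m.choose (4 * t)) * (4096 * (((4 * t : ℕ) : ℝ) ^ 6 * (m : ℝ) ^ 6)) ^ t
      ≤ (3 * (m / t)) ^ t * (3 * (m / (4 * t : ℕ))) ^ (4 * t)
          * (4096 * (((4 * t : ℕ) : ℝ) ^ 6 * (m : ℝ) ^ 6)) ^ t := by
        gcongr
    _ = ((3 * (m / t)) * (3 * (m / (4 * t : ℕ))) ^ 4
          * (4096 * (((4 * t : ℕ) : ℝ) ^ 6 * (m : ℝ) ^ 6))) ^ t := by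
        rw [pow_mul, ← mul_pow, ← mul_pow]
    _ ≤ ((1 / 2) * (m : ℝ) ^ 12) ^ t := by
        refine pow_le_pow_left₀ (by positivity) ?_ t
        push_cast
        have : (3 * ((m : ℝ) / t)) * (3 * (m / (4 * t))) ^ 4 * (4096 * ((4 * t) ^ 6 * (m : ℝ) ^ 6))
            = (15925248 : ℝ) * (t * (m : ℝ) ^ 11) := by
          field_simp; norm_num
        rw [this]
        have h12 : (m : ℝ) ^ 12 = m * (m : ℝ) ^ 11 := by ring
        rw [h12]
        have h11 : (0 : ℝ) < (m : ℝ) ^ 11 := by positivity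
        have : (15925248 : ℝ) * t ≤ 1 / 2 * m := by nlinarith
        nlinarith
    _ = (1 / 2) ^ t * ((m : ℝ) ^ 12) ^ t := by rw [mul_pow]

/-- Expanders exist: in some digraph of out-degree `12` on `2²⁵ θ` vertices, any set `S` receiving
at least half of the out-labels of each vertex of a set `T` of size at most `θ` is at least four
times as large as `T`. -/
lemma exists_expander (θ : ℕ) (hθ : 1 ≤ θ) :
    ∃ g : Fin (2 ^ 25 * θ) → Fin 12 → Fin (2 ^ 25 * θ),
      ∀ T S : Finset (Fin (2 ^ 25 * θ)), T.Nonempty → T.card ≤ θ →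
        (∀ w ∈ T, 6 ≤ (Finset.univ.filter (fun i => g w i ∈ S)).card) →
        4 * T.card ≤ S.card := by
  classical
  by_contra hcon
  push Not at hcon
  obtain ⟨m, hm⟩ : ∃ m, m = 2 ^ 25 * θ := ⟨_, rfl⟩
  rw [← hm] at hcon
  have hcov : (Finset.univ : Finset (Fin m → Fin 12 → Fin m)) ⊆
      (Finset.Icc 1 θ).biUnion (fun t =>
        ((Finset.univ : Finset (Fin m)).powersetCard t ×ˢ
          (Finset.univ : Finset (Fin m)).powersetCard (4 * t)).biUnion (fun P =>
          Finset.univ.filter (fun g : Fin m → Fin 12 → Fin m =>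
            ∀ w ∈ P.1, 6 ≤ (Finset.univ.filter (fun i => g w i ∈ P.2)).card))) := by
    intro g _
    obtain ⟨T, S, hT, hTθ, hTS, hlt⟩ := hcon g
    obtain ⟨S', hSS', hS'⟩ := Finset.exists_superset_card_eq (s := S) (n := 4 * T.card) hlt.le
      (by rw [Fintype.card_fin]; omega)
    simp only [Finset.mem_biUnion, Finset.mem_product, Finset.mem_powersetCard, Finset.mem_filter,
      Finset.mem_univ, true_and, Finset.mem_Icc]
    refine ⟨T.card, ⟨hT.card_pos, hTθ⟩, (T, S'), ⟨⟨Finset.subset_univ _, rfl⟩,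
      ⟨Finset.subset_univ _, hS'⟩⟩, fun w hw => (hTS w hw).trans (Finset.card_le_card ?_)⟩
    intro i hi
    simp only [Finset.mem_filter, Finset.mem_univ, true_and] at hi ⊢
    exact hSS' hi
  have hcard := (Finset.card_le_card hcov).trans Finset.card_biUnion_le
  have hle : ∀ t ∈ Finset.Icc 1 θ,
      ((((Finset.univ : Finset (Fin m)).powersetCard t ×ˢ
          (Finset.univ : Finset (Fin m)).powersetCard (4 * t)).biUnion (fun P =>
          Finset.univ.filter (fun g : Fin m → Fin 12 → Fin m =>
            ∀ w ∈ P.1, 6 ≤ (Finset.univ.filter (fun i => g w i ∈ P.2)).card))).card : ℝ)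
      ≤ (1 / 2) ^ t * ((m : ℝ) ^ 12) ^ m := by
    intro t ht
    rw [Finset.mem_Icc] at ht
    refine le_trans ?_ (term_bound m t ht.1 (by rw [hm]; exact Nat.mul_le_mul_left _ ht.2))
    have h1 : ((((Finset.univ : Finset (Fin m)).powersetCard t ×ˢ
          (Finset.univ : Finset (Fin m)).powersetCard (4 * t)).biUnion (fun P =>
          Finset.univ.filter (fun g : Fin m → Fin 12 → Fin m =>
            ∀ w ∈ P.1, 6 ≤ (Finset.univ.filter (fun i => g w i ∈ P.2)).card))).card)
        ≤ m.choose t * m.choose (4 * t) *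
          ((4096 * ((4 * t) ^ 6 * m ^ 6)) ^ t * (m ^ 12) ^ (m - t)) := by
      refine Finset.card_biUnion_le.trans ?_
      refine (Finset.sum_le_card_nsmul _ _
        ((4096 * ((4 * t) ^ 6 * m ^ 6)) ^ t * (m ^ 12) ^ (m - t)) ?_).trans ?_
      · intro P hP
        simp only [Finset.mem_product, Finset.mem_powersetCard] at hP
        have := card_bad m P.1 P.2
        rwa [hP.1.2, hP.2.2] at this
      · rw [Finset.card_product, Finset.card_powersetCard, Finset.card_powersetCard, smul_eq_mul]
        simp
    exact_mod_cast h1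
  have hsum : (((m : ℝ) ^ 12) ^ m) ≤ ∑ t ∈ Finset.Icc 1 θ, (1 / 2) ^ t * ((m : ℝ) ^ 12) ^ m := by
    refine le_trans ?_ (Finset.sum_le_sum hle)
    have : (m ^ 12) ^ m = (Finset.univ : Finset (Fin m → Fin 12 → Fin m)).card := by simp
    rw [← this] at hcard
    exact_mod_cast hcard
  rw [← Finset.sum_mul] at hsum
  have hgeo : ∑ t ∈ Finset.Icc 1 θ, ((1 : ℝ) / 2) ^ t < 1 := by
    have : ∀ k : ℕ, ∑ t ∈ Finset.Icc 1 k, ((1 : ℝ) / 2) ^ t = 1 - (1 / 2) ^ k := by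
      intro k
      induction k with
      | zero => simp
      | succ k ih => rw [Finset.sum_Icc_succ_top (by omega), ih]; ring
    rw [this]
    have : (0 : ℝ) < (1 / 2) ^ θ := by positivity
    linarith
  have hmpos : (0 : ℝ) < m := by
    have : 0 < m := by omega
    exact_mod_cast this
  have hpos : (0 : ℝ) < ((m : ℝ) ^ 12) ^ m := by positivity
  nlinarith

/-! ### Walks avoiding small sets in an expander -/

/-- The expansion property of a digraph of out-degree `12`, given by labelled out-neighbours. -/
def Expands {U : Type} [DecidableEq U] (θ : ℕ) (g : U → Fin 12 → U) : Prop :=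
  ∀ T S : Finset U, T.Nonempty → T.card ≤ θ →
    (∀ w ∈ T, 6 ≤ (Finset.univ.filter (fun i => g w i ∈ S)).card) → 4 * T.card ≤ S.card

/-- The vertices at least half of whose out-labels lead into `S`. -/
def stuck {U : Type} [Fintype U] [DecidableEq U] (g : U → Fin 12 → U) (S : Finset U) : Finset U :=
  Finset.univ.filter (fun w => 6 ≤ (Finset.univ.filter (fun i => g w i ∈ S)).card)

lemma card_stuck_lt {U : Type} [Fintype U] [DecidableEq U] {θ : ℕ} (hθ : 1 ≤ θ)
    {g : U → Fin 12 → U} (hg : Expands θ g) {S : Finset U} (hS : S.card < 4 * θ) :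
    (stuck g S).card < θ := by
  by_contra hcon
  push Not at hcon
  obtain ⟨T, hT, hTc⟩ := Finset.exists_subset_card_eq hcon
  have := hg T S (Finset.card_pos.mp (by omega)) hTc.le (fun w hw => by
    have := hT hw
    simpa [stuck] using this)
  omega

/-- Backward induction for a segment of length `L`: `blocked g B L k` consists of the vertices that
are not to be visited at time `L - k`, because they are forbidden by `B` at that time, or because
at least half of their out-labels lead to vertices not to be visited at the next time. -/
def blocked {U : Type} [Fintype U] [DecidableEq U] (g : U → Fin 12 → U) (B : ℕ → Finset U)
    (L : ℕ) : ℕ → Finset U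
  | 0 => B L
  | k + 1 => B (L - (k + 1)) ∪ stuck g (blocked g B L k)

lemma card_blocked_lt {U : Type} [Fintype U] [DecidableEq U] {θ : ℕ} (hθ : 1 ≤ θ)
    {g : U → Fin 12 → U} (hg : Expands θ g) {B : ℕ → Finset U} (hB : ∀ j, (B j).card ≤ 2 * θ)
    (L k : ℕ) : (blocked g B L k).card < 4 * θ := by
  induction k with
  | zero => have := hB L; simp only [blocked]; omega
  | succ k ih =>
    have h1 := hB (L - (k + 1))
    have h2 := card_stuck_lt hθ hg ih
    have h3 := Finset.card_union_le (B (L - (k + 1))) (stuck g (blocked g B L k))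
    simp only [blocked]
    omega

/-- Breadth-first search among the vertices outside `W`. At each time `j ≤ L` there are `2 ^ j`
endpoints of walks from `w0` that avoid `W`; they are chosen outside the set `P` of fewer than
`2 ^ j` vertices used before, so the walks are injective. The factor `4` in the expansion leaves
room to double the number of endpoints after discarding used vertices. -/
lemma bfs {U : Type} [Fintype U] [DecidableEq U] {θ L : ℕ} (hL : 2 ^ L ≤ 2 * θ)
    {g : U → Fin 12 → U} (hg : Expands θ g) (W : ℕ → Finset U)
    (hW : ∀ j < L, stuck g (W (j + 1)) ⊆ W j) (w0 : U) (h0 : w0 ∉ stuck g (W 1)) :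
    ∀ j ≤ L, ∃ T P : Finset U, T.card = 2 ^ j ∧ P.card + 1 ≤ 2 ^ j ∧ Disjoint T P ∧
      ∀ z ∈ T, (j < L → z ∉ stuck g (W (j + 1))) ∧ ∃ q : ℕ → U, q 0 = w0 ∧ q j = z ∧
        (∀ i < j, q i ∈ P) ∧ (∀ i < j, ∃ l, g (q i) l = q (i + 1)) ∧
        (∀ i < j, q (i + 1) ∉ W (i + 1)) ∧ Set.InjOn q (Set.Iic j) := by
  intro j
  induction j with
  | zero =>
    intro _
    refine ⟨{w0}, ∅, by simp, by simp, by simp, fun z hz => ?_⟩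
    rw [Finset.mem_singleton] at hz
    subst hz
    refine ⟨fun _ => h0, fun _ => z, rfl, rfl, by simp, by simp, by simp, ?_⟩
    intro a ha b hb _
    simp only [Set.mem_Iic, Nat.le_zero] at ha hb
    omega
  | succ j ih =>
    intro hj
    obtain ⟨T, P, hTc, hPc, hdis, hT⟩ := ih (by omega)
    have hpow : 2 ^ (j + 1) = 2 * 2 ^ j := by ring
    have hTθ : T.card ≤ θ := by
      have : 2 ^ (j + 1) ≤ 2 ^ L := Nat.pow_le_pow_right (by norm_num) hj
      omega
    set S := (T.biUnion (fun z => Finset.univ.image (g z))) \ W (j + 1) with hS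
    have hSc : 4 * T.card ≤ S.card := by
      refine hg T S (Finset.card_pos.mp (by rw [hTc]; positivity)) hTθ (fun z hz => ?_)
      have h1 := (hT z hz).1 (by omega)
      simp only [stuck, Finset.mem_filter, Finset.mem_univ, true_and, not_le] at h1
      have h2 := Finset.card_filter_add_card_filter_not (s := (Finset.univ : Finset (Fin 12)))
        (fun i => g z i ∈ W (j + 1))
      simp only [Finset.card_univ, Fintype.card_fin] at h2
      have h3 : (Finset.univ.filter (fun i => g z i ∉ W (j + 1)))
          ⊆ (Finset.univ.filter (fun i => g z i ∈ S)) := by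
        intro i hi
        simp only [Finset.mem_filter, Finset.mem_univ, true_and] at hi ⊢
        rw [hS, Finset.mem_sdiff, Finset.mem_biUnion]
        exact ⟨⟨z, hz, Finset.mem_image_of_mem _ (Finset.mem_univ _)⟩, hi⟩
      have := Finset.card_le_card h3
      omega
    have hPc' : (P ∪ T).card + 1 ≤ 2 ^ (j + 1) := by
      have := Finset.card_union_le P T
      omega
    have h4 : 2 ^ (j + 1) ≤ (S \ (P ∪ T)).card := by
      have := Finset.le_card_sdiff (P ∪ T) S
      omega
    obtain ⟨T', hT', hTc'⟩ := Finset.exists_subset_card_eq h4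
    refine ⟨T', P ∪ T, hTc', hPc', ?_, fun z' hz' => ?_⟩
    · rw [Finset.disjoint_left]
      intro a ha
      exact (Finset.mem_sdiff.mp (hT' ha)).2
    · have h5 := Finset.mem_sdiff.mp (hT' hz')
      rw [hS, Finset.mem_sdiff, Finset.mem_biUnion] at h5
      obtain ⟨⟨⟨z, hz, hzz⟩, hzW⟩, hzP⟩ := h5
      rw [Finset.mem_image] at hzz
      obtain ⟨l, -, hl⟩ := hzz
      rw [Finset.mem_union, not_or] at hzP
      refine ⟨fun hlt h => hzW (hW _ hlt h), ?_⟩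
      obtain ⟨-, q, hq0, hqj, hqP, hqe, hqW, hqi⟩ := hT z hz
      have hqPT : ∀ i ≤ j, q i ∈ P ∪ T := by
        intro i hi
        rcases hi.lt_or_eq with h | h
        · exact Finset.mem_union_left _ (hqP i h)
        · rw [h, hqj]; exact Finset.mem_union_right _ hz
      have hz'n : z' ∉ P ∪ T := by
        rw [Finset.mem_union, not_or]; exact hzP
      refine ⟨fun i => if i ≤ j then q i else z', by simp [hq0], by simp, ?_, ?_, ?_, ?_⟩
      · intro i hi
        dsimp only
        rw [if_pos (by omega)]
        exact hqPT i (by omega)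
      · intro i hi
        dsimp only
        rcases (Nat.lt_succ_iff.mp hi).lt_or_eq with h | h
        · rw [if_pos h.le, if_pos (by omega)]; exact hqe i h
        · subst h
          rw [if_pos le_rfl, if_neg (by omega), hqj]; exact ⟨l, hl⟩
      · intro i hi
        dsimp only
        rcases (Nat.lt_succ_iff.mp hi).lt_or_eq with h | h
        · rw [if_pos (by omega)]; exact hqW i h
        · subst h
          rw [if_neg (by omega)]; exact hzW
      · intro a ha b hb hab
        simp only [Set.mem_Iic] at ha hb
        dsimp only at hab
        split_ifs at hab with h1 h2 h2
        · exact hqi h1 h2 hab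
        · exact (hz'n (hab ▸ hqPT a h1)).elim
        · exact (hz'n (hab ▸ hqPT b h2)).elim
        · omega

/-- One segment of the walk. The set `Z` of bad starting vertices depends only on the forbidden
sets `B`, and is small when these are. The endpoint can be chosen outside any given small set
`Z'`, to be used with the bad starting vertices of the next segment. -/
lemma segment {U : Type} [Fintype U] [DecidableEq U] {θ L : ℕ} (hθ : 1 ≤ θ)
    (hL1 : θ < 2 ^ L) (hL : 2 ^ L ≤ 2 * θ)
    {g : U → Fin 12 → U} (hg : Expands θ g) (B : ℕ → Finset U) :
    ∃ Z : Finset U, ((∀ j, (B j).card ≤ 2 * θ) → Z.card < θ) ∧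
      ∀ w0, w0 ∉ Z → ∀ Z' : Finset U, Z'.card < θ →
      ∃ q : ℕ → U, q 0 = w0 ∧ (∀ i < L, ∃ l, g (q i) l = q (i + 1)) ∧
        (∀ i < L, q (i + 1) ∉ B (i + 1)) ∧ Set.InjOn q (Set.Iic L) ∧ q L ∉ Z' := by
  have hLpos : 0 < L := by
    rcases Nat.eq_zero_or_pos L with h | h
    · subst h; simp at hL1; omega
    · exact h
  refine ⟨stuck g (blocked g B L (L - 1)), fun hB => card_stuck_lt hθ hg
    (card_blocked_lt hθ hg hB L _), fun w0 hw0 Z' hZ' => ?_⟩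
  obtain ⟨T, P, hTc, -, -, hT⟩ := bfs hL hg (fun j => blocked g B L (L - j)) (by
    intro j hj
    have : L - j = (L - (j + 1)) + 1 := by omega
    rw [this, blocked]
    exact Finset.subset_union_right) w0 hw0 L le_rfl
  obtain ⟨z, hz, hzZ⟩ := Finset.exists_mem_notMem_of_card_lt_card
    (show Z'.card < T.card by omega)
  obtain ⟨-, q, hq0, hqL, -, hqe, hqW, hqi⟩ := hT z hz
  refine ⟨q, hq0, hqe, fun i hi h => hqW i hi ?_, hqi, hqL ▸ hzZ⟩
  rcases Nat.eq_zero_or_pos (L - (i + 1)) with h0 | h0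
  · rw [h0, blocked]
    have : L = i + 1 := by omega
    rw [this]; exact h
  · obtain ⟨k, hk⟩ : ∃ k, L - (i + 1) = k + 1 := ⟨L - (i + 1) - 1, by omega⟩
    rw [hk, blocked, ← hk]
    have : L - (L - (i + 1)) = i + 1 := by omega
    rw [this]
    exact Finset.mem_union_left _ h

/-- Concatenation of segments; the forbidden sets of a segment may depend on the
walk up to the beginning of the preceding segment. -/
lemma long_walk {U : Type} [Fintype U] [DecidableEq U] {θ L : ℕ} (hθ : 1 ≤ θ)
    (hU : θ ≤ Fintype.card U) (hL1 : θ < 2 ^ L) (hL : 2 ^ L ≤ 2 * θ)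
    {g : U → Fin 12 → U} (hg : Expands θ g) (Bf : ℕ → (ℕ → U) → ℕ → Finset U)
    (hB : ∀ s w j, (Bf s w j).card ≤ 2 * θ)
    (hdep : ∀ s w w', (∀ i, 1 ≤ i → i ≤ (s - 1) * L → w i = w' i) → Bf s w = Bf s w') (M : ℕ) :
    ∃ w : ℕ → U, (∀ i < M * L, ∃ l, g (w i) l = w (i + 1)) ∧
      (∀ s < M, ∀ j < L, w (s * L + j + 1) ∉ Bf s w (j + 1)) ∧
      (∀ s < M, ∀ i < L, ∀ j < L, w (s * L + i + 1) = w (s * L + j + 1) → i = j) := by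
  choose Z hZc hZ using fun B => segment hθ hL1 hL hg B
  suffices h : ∃ w : ℕ → U, (∀ i < M * L, ∃ l, g (w i) l = w (i + 1)) ∧
      (∀ s < M, ∀ j < L, w (s * L + j + 1) ∉ Bf s w (j + 1)) ∧
      (∀ s < M, ∀ i < L, ∀ j < L, w (s * L + i + 1) = w (s * L + j + 1) → i = j) ∧
      w (M * L) ∉ Z (Bf M w) by
    obtain ⟨w, h1, h2, h3, -⟩ := h
    exact ⟨w, h1, h2, h3⟩
  induction M with
  | zero =>
    -- for `s = 0` the forbidden sets do not depend on the walk, so any constant walk works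
    have : Nonempty U := Fintype.card_pos_iff.mp (by omega)
    have : (Z (Bf 0 (fun _ => Classical.arbitrary U))).card < (Finset.univ : Finset U).card :=
      lt_of_lt_of_le (hZc _ (hB _ _)) hU
    obtain ⟨z, -, hz⟩ := Finset.exists_mem_notMem_of_card_lt_card this
    refine ⟨fun _ => z, by simp, by simp, by simp, ?_⟩
    rwa [hdep 0 _ (fun _ => Classical.arbitrary U)]
    intro i h1 h2
    simp at h2
    omega
  | succ M ih =>
    obtain ⟨w, h1, h2, h3, h4⟩ := ih
    obtain ⟨q, hq0, hqe, hqB, hqi, hqZ⟩ := hZ (Bf M w) _ h4 (Z (Bf (M + 1) w)) (hZc _ (hB _ _))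
    set w' : ℕ → U := fun i => if i ≤ M * L then w i else q (i - M * L) with hw'
    have hold : ∀ i ≤ M * L, w' i = w i := fun i hi => by simp [hw', hi]
    have hnew : ∀ i, w' (M * L + i) = q i := by
      intro i
      rcases Nat.eq_zero_or_pos i with h | h
      · subst h
        rw [hold _ (by simp), hq0]; rfl
      · simp only [hw']
        rw [if_neg (by omega)]
        congr 1; omega
    have hBf : ∀ s ≤ M + 1, Bf s w' = Bf s w := by
      intro s hs
      refine hdep s _ _ (fun i _ hi => hold i (hi.trans (Nat.mul_le_mul_right _ (by omega))))
    have hle : ∀ s < M, ∀ j < L, s * L + j + 1 ≤ M * L := by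
      intro s hs j hj
      have : (s + 1) * L ≤ M * L := Nat.mul_le_mul_right _ hs
      have : (s + 1) * L = s * L + L := by ring
      omega
    have hsucc : (M + 1) * L = M * L + L := by ring
    refine ⟨w', ?_, ?_, ?_, ?_⟩
    · intro i hi
      rcases lt_or_ge i (M * L) with h | h
      · rw [hold i h.le, hold _ h]; exact h1 i h
      · obtain ⟨k, rfl⟩ := Nat.exists_eq_add_of_le h
        rw [hnew, add_assoc, hnew]
        exact hqe k (by omega)
    · intro s hs j hj
      rw [hBf s (by omega)]
      rcases (Nat.lt_succ_iff.mp hs).lt_or_eq with h | h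
      · rw [hold _ (hle s h j hj)]; exact h2 s h j hj
      · subst h
        rw [add_assoc, hnew]; exact hqB j hj
    · intro s hs i hi j hj hij
      rcases (Nat.lt_succ_iff.mp hs).lt_or_eq with h | h
      · rw [hold _ (hle s h i hi), hold _ (hle s h j hj)] at hij
        exact h3 s h i hi j hj hij
      · subst h
        rw [add_assoc, hnew, add_assoc, hnew] at hij
        have := hqi (show i + 1 ∈ Set.Iic L by simp; omega)
          (show j + 1 ∈ Set.Iic L by simp; omega) hij
        omega
    · rw [hBf _ le_rfl, hsucc, hnew]; exact hqZ

/-! ### Spreading fibres evenly by one coordinate -/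

lemma exists_enum {U : Type} {d : ℕ} (S : Finset U) (hS : S.Nonempty) (h : S.card ≤ d) :
    ∃ e : Fin d → U, ∀ u ∈ S, ∃ i, e i = u := by
  obtain ⟨u0, hu0⟩ := hS
  refine ⟨fun i => if h : i.1 < S.card then (S.equivFin.symm ⟨i.1, h⟩ : U) else u0, fun u hu => ?_⟩
  refine ⟨⟨(S.equivFin ⟨u, hu⟩).1, lt_of_lt_of_le (S.equivFin ⟨u, hu⟩).2 h⟩, ?_⟩
  simp

/-- Markov's inequality: few points carry a load of at least `cap`. -/
lemma card_mul_filter_le {V U : Type} [Fintype V] [Fintype U] [DecidableEq U] (f : V → U)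
    (A : Finset V) (cap : ℕ) :
    (Finset.univ.filter (fun u => cap ≤ (A.filter (fun v => f v = u)).card)).card * cap
      ≤ A.card := by
  rw [← smul_eq_mul]
  refine (Finset.card_nsmul_le_sum _ (fun u => (A.filter (fun v => f v = u)).card) cap
    (fun u hu => (Finset.mem_filter.mp hu).2)).trans ?_
  refine (Finset.sum_le_sum_of_subset (Finset.subset_univ _)).trans ?_
  rw [← Finset.card_eq_sum_card_fiberwise (fun v _ => Finset.mem_coe.mpr (Finset.mem_univ _))]

/-- One coordinate of the embedding: a walk in the expander, indexed by `τ`, spreads every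
fibre of `κ` evenly. The function `nb` lists, up to repetition, each vertex with its
out-neighbours and, if these are boundedly many, its in-neighbours. -/
lemma exists_coordinate (θ : ℕ) (hθ : 1 ≤ θ) :
    ∃ nb : Fin (2 ^ 25 * θ) → Fin (13 + 12 * 2 ^ 25) → Fin (2 ^ 25 * θ),
      ∀ (b : ℕ), 1 ≤ b → ∀ (V ι : Type) [Fintype V] [DecidableEq V] [DecidableEq ι]
        (κ : V → ι) (τ : V → ℕ) (t0 : ℕ), 1 ≤ t0 →
        (∀ i, (Finset.univ.filter (fun v => τ v = i)).card ≤ b) →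
        (∀ k, (Finset.univ.filter (fun v => κ v = k)).card ≤ t0 * (2 ^ 25 * θ)) →
        ∃ f : V → Fin (2 ^ 25 * θ),
          (∀ v v', τ v' ≤ τ v + 1 → τ v ≤ τ v' + 1 → ∃ i, nb (f v) i = f v') ∧
          ∀ k u, (Finset.univ.filter (fun v => κ v = k ∧ f v = u)).card
            ≤ (b * 2 ^ 25 + 2 * b) * t0 := by
  classical
  obtain ⟨g, hg'⟩ := exists_expander θ hθ
  -- the numeral is hidden to keep arithmetic tactics from evaluating it
  generalize hΓ : 2 ^ 25 = Γ at *
  have hΓ1 : 1 ≤ Γ := by rw [← hΓ]; norm_num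
  generalize hm : Γ * θ = m at *
  have hg : Expands θ g := hg'
  set indeg : Fin m → ℕ := fun u => (Finset.univ.filter
    (fun p : Fin m × Fin 12 => g p.1 p.2 = u)).card with hindeg
  -- vertices of high in-degree are always avoided, as their in-neighbours cannot all be listed
  set Hi : Finset (Fin m) := Finset.univ.filter (fun u => 12 * Γ ≤ indeg u) with hHi
  have hHic : Hi.card ≤ θ := by
    have := card_mul_filter_le (fun p : Fin m × Fin 12 => g p.1 p.2) Finset.univ (12 * Γ)
    rw [← hHi, Finset.card_univ, Fintype.card_prod, Fintype.card_fin, Fintype.card_fin,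
      show m * 12 = θ * (12 * Γ) by rw [← hm]; ring] at this
    exact Nat.le_of_mul_le_mul_right this (by omega)
  have hnb : ∀ u : Fin m, ∃ e : Fin (13 + 12 * Γ) → Fin m,
      (∃ i, e i = u) ∧ (∀ l, ∃ i, e i = g u l) ∧
      (u ∉ Hi → ∀ w l, g w l = u → ∃ i, e i = w) := by
    intro u
    set S : Finset (Fin m) := insert u (Finset.univ.image (g u)) ∪
      (if u ∈ Hi then ∅ else (Finset.univ.filter
        (fun p : Fin m × Fin 12 => g p.1 p.2 = u)).image Prod.fst) with hS
    have hSc : S.card ≤ 13 + 12 * Γ := by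
      refine (Finset.card_union_le _ _).trans ?_
      refine add_le_add ((Finset.card_insert_le _ _).trans ?_) ?_
      · have := Finset.card_image_le (s := (Finset.univ : Finset (Fin 12))) (f := g u)
        simp only [Finset.card_univ, Fintype.card_fin] at this
        omega
      · split_ifs with h
        · simp
        · refine Finset.card_image_le.trans ?_
          simp only [hHi, Finset.mem_filter, Finset.mem_univ, true_and, not_le] at h
          exact h.le
    obtain ⟨e, he⟩ := exists_enum S ⟨u, by simp [hS]⟩ hSc
    refine ⟨e, he u (by simp [hS]), fun l => he _ (by simp [hS]), fun hu w l hwl => he w ?_⟩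
    rw [hS, if_neg hu]
    refine Finset.mem_union_right _ (Finset.mem_image.mpr ⟨(w, l), ?_, rfl⟩)
    simpa using hwl
  choose nb hnb1 hnb2 hnb3 using hnb
  refine ⟨nb, ?_⟩
  intro b hb V ι _ _ _ κ τ t0 ht0 hτ hκ
  obtain ⟨L, hL0⟩ : ∃ L, L = Nat.log 2 θ + 1 := ⟨_, rfl⟩
  have hL1 : θ < 2 ^ L := by rw [hL0]; exact Nat.lt_pow_succ_log_self (by norm_num) θ
  have hL2 : 2 ^ L ≤ 2 * θ := by
    have := Nat.pow_log_le_self 2 (show θ ≠ 0 by omega)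
    rw [hL0, pow_succ]; omega
  have hLpos : 0 < L := by omega
  set cap := b * Γ * t0 with hcap
  -- in segment `s`, only loads up to the beginning of segment `s - 1` count
  set early : ℕ → Finset V := fun s => Finset.univ.filter (fun v => τ v + 1 ≤ (s - 1) * L) with hearly
  set heavy : ℕ → (ℕ → Fin m) → ι → Finset (Fin m) := fun s w k =>
    Finset.univ.filter (fun u => cap ≤
      (((early s).filter (fun v => κ v = k)).filter (fun v => w (τ v + 1) = u)).card) with hheavy
  set Bf : ℕ → (ℕ → Fin m) → ℕ → Finset (Fin m) := fun s w j =>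
    Hi ∪ (Finset.univ.filter (fun v => τ v + 1 = s * L + j)).biUnion
      (fun v => heavy s w (κ v)) with hBf
  have hheavyc : ∀ s w k, b * (heavy s w k).card ≤ θ := by
    intro s w k
    have h1 := card_mul_filter_le (fun v => w (τ v + 1)) ((early s).filter (fun v => κ v = k)) cap
    have h2 : ((early s).filter (fun v => κ v = k)).card ≤ t0 * m :=
      (Finset.card_le_card (Finset.filter_subset_filter _ (Finset.subset_univ _))).trans (hκ k)
    have h3 : (Γ * t0) * (b * (heavy s w k).card) ≤ (Γ * t0) * θ := by
      calc (Γ * t0) * (b * (heavy s w k).card) = (heavy s w k).card * cap := by rw [hcap]; ring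
        _ ≤ t0 * m := h1.trans h2
        _ = (Γ * t0) * θ := by rw [← hm]; ring
    exact Nat.le_of_mul_le_mul_left h3 (Nat.mul_pos hΓ1 ht0)
  have hBc : ∀ s w j, (Bf s w j).card ≤ 2 * θ := by
    intro s w j
    refine (Finset.card_union_le _ _).trans ?_
    have h1 : ((Finset.univ.filter (fun v => τ v + 1 = s * L + j)).biUnion
      (fun v => heavy s w (κ v))).card ≤ θ := by
      refine Nat.le_of_mul_le_mul_left (?_ : b * _ ≤ b * θ) hb
      refine (Nat.mul_le_mul_left _ Finset.card_biUnion_le).trans ?_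
      rw [Finset.mul_sum]
      refine (Finset.sum_le_card_nsmul _ _ θ (fun v _ => hheavyc s w (κ v))).trans ?_
      rw [smul_eq_mul]
      refine Nat.mul_le_mul_right _ ((Finset.card_le_card ?_).trans (hτ (s * L + j - 1)))
      intro v hv
      simp only [Finset.mem_filter, Finset.mem_univ, true_and] at hv ⊢
      omega
    omega
  have hdep : ∀ s w w', (∀ i, 1 ≤ i → i ≤ (s - 1) * L → w i = w' i) → Bf s w = Bf s w' := by
    intro s w w' hww
    have : heavy s w = heavy s w' := by
      funext k
      simp only [hheavy]
      refine Finset.filter_congr (fun u _ => ?_)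
      have : (((early s).filter (fun v => κ v = k)).filter (fun v => w (τ v + 1) = u))
          = (((early s).filter (fun v => κ v = k)).filter (fun v => w' (τ v + 1) = u)) := by
        refine Finset.filter_congr (fun v hv => ?_)
        simp only [hearly, Finset.mem_filter, Finset.mem_univ, true_and] at hv
        rw [hww _ (by omega) hv.1]
      rw [this]
    funext j
    simp only [hBf, this]
  have hUc : θ ≤ Fintype.card (Fin m) := by
    rw [Fintype.card_fin, ← hm]; exact Nat.le_mul_of_pos_left _ hΓ1
  obtain ⟨w, hwe, hwB, hwi⟩ := long_walk hθ hUc hL1 hL2 hg Bf hBc hdep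
    (Finset.univ.sup τ + 1)
  have hτM : ∀ v, τ v / L < Finset.univ.sup τ + 1 := fun v =>
    Nat.lt_succ_of_le ((Nat.div_le_self _ _).trans (Finset.le_sup (Finset.mem_univ v)))
  have hdm : ∀ v, τ v / L * L + τ v % L = τ v := fun v => Nat.div_add_mod' _ _
  have hnotB : ∀ v, w (τ v + 1) ∉ Bf (τ v / L) w (τ v % L + 1) := by
    intro v
    have := hwB _ (hτM v) _ (Nat.mod_lt (τ v) hLpos)
    rwa [hdm] at this
  have hedge : ∀ v, ∃ l, g (w (τ v)) l = w (τ v + 1) := by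
    intro v
    refine hwe _ ?_
    have h1 : τ v ≤ Finset.univ.sup τ := Finset.le_sup (Finset.mem_univ v)
    nlinarith
  refine ⟨fun v => w (τ v + 1), ?_, ?_⟩
  · intro v v' h1 h2
    dsimp only
    rcases lt_trichotomy (τ v) (τ v') with h | h | h
    · have : τ v' = τ v + 1 := by omega
      obtain ⟨l, hl⟩ := hedge v'
      rw [this] at hl
      rw [this, ← hl]
      exact hnb2 _ l
    · rw [← h]; exact hnb1 _
    · have : τ v = τ v' + 1 := by omega
      obtain ⟨l, hl⟩ := hedge v
      refine hnb3 _ (fun hH => hnotB v (Finset.mem_union_left _ hH)) _ l ?_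
      rw [← hl, this]
  · intro k u
    set A := Finset.univ.filter (fun v => κ v = k ∧ w (τ v + 1) = u) with hA
    rcases A.eq_empty_or_nonempty with h | hne
    · rw [h]; simp
    obtain ⟨v0, hv0, hmax⟩ := Finset.exists_max_image A τ hne
    have hv0' := hv0
    simp only [hA, Finset.mem_filter, Finset.mem_univ, true_and] at hv0'
    have hseg : ∀ s, (A.filter (fun v => τ v / L = s)).card ≤ b := by
      intro s
      -- the walk is injective on a segment, so one segment contributes a single fibre of `τ`
      rcases (A.filter (fun v => τ v / L = s)).eq_empty_or_nonempty with h | ⟨v1, hv1⟩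
      · rw [h]; simp
      refine (Finset.card_le_card ?_).trans (hτ (τ v1))
      intro v hv
      simp only [hA, Finset.mem_filter, Finset.mem_univ, true_and] at hv hv1 ⊢
      have := hwi s (hv.2 ▸ hτM v) _ (Nat.mod_lt (τ v) hLpos) _ (Nat.mod_lt (τ v1) hLpos) (by
        have e1 := hdm v
        have e2 := hdm v1
        rw [hv.2] at e1
        rw [hv1.2] at e2
        rw [e1, e2, hv.1.2, hv1.1.2])
      rw [← hdm v, ← hdm v1, hv.2, hv1.2, this]
    -- the position was not yet overloaded when the last vertex `v0` of the fibre was placed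
    have hold : (((early (τ v0 / L)).filter (fun v => κ v = k)).filter
        (fun v => w (τ v + 1) = u)).card < cap := by
      have := hnotB v0
      rw [hBf] at this
      simp only [Finset.mem_union, not_or, Finset.mem_biUnion, not_exists, not_and] at this
      have h2 := this.2 v0 (by
        simp only [Finset.mem_filter, Finset.mem_univ, true_and]
        rw [← add_assoc, hdm])
      rw [hheavy, hv0'.1, hv0'.2] at h2
      simpa using h2
    have hcov : A ⊆ (((early (τ v0 / L)).filter (fun v => κ v = k)).filter
        (fun v => w (τ v + 1) = u)) ∪ (A.filter (fun v => τ v / L = τ v0 / L) ∪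
          A.filter (fun v => τ v / L = τ v0 / L - 1)) := by
      intro v hv
      have hvle := hmax v hv
      have hvA := hv
      simp only [hA, Finset.mem_filter, Finset.mem_univ, true_and] at hv
      simp only [Finset.mem_union, Finset.mem_filter, hvA, true_and, hearly, Finset.mem_univ,
        hv.1, hv.2, and_true]
      by_cases h : τ v + 1 ≤ (τ v0 / L - 1) * L
      · exact Or.inl h
      · right
        have h1 : τ v0 / L - 1 ≤ τ v / L := by
          rw [Nat.le_div_iff_mul_le hLpos]; omega
        have h2 : τ v / L ≤ τ v0 / L := Nat.div_le_div_right hvle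
        omega
    have h1 := Finset.card_le_card hcov
    have h2 := Finset.card_union_le (((early (τ v0 / L)).filter (fun v => κ v = k)).filter
        (fun v => w (τ v + 1) = u)) (A.filter (fun v => τ v / L = τ v0 / L) ∪
          A.filter (fun v => τ v / L = τ v0 / L - 1))
    have h3 := Finset.card_union_le (A.filter (fun v => τ v / L = τ v0 / L))
      (A.filter (fun v => τ v / L = τ v0 / L - 1))
    have h4 := hseg (τ v0 / L)
    have h5 := hseg (τ v0 / L - 1)
    have h6 : (b * Γ + 2 * b) * t0 = cap + 2 * (b * t0) := by rw [hcap]; ring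
    have h7 : b ≤ b * t0 := Nat.le_mul_of_pos_right _ ht0
    omega

/-! ### The host hypergraph -/

/-- Iterating the splitting of fibres over `N` coordinates; `κ` records the coordinates already
chosen. -/
lemma exists_coordinates {m d C b : ℕ} (hC : 1 ≤ C) (nb : Fin m → Fin d → Fin m)
    (V : Type) [Fintype V] [DecidableEq V]
    (h : ∀ (ι : Type) [DecidableEq ι]
        (κ : V → ι) (τ : V → ℕ) (t0 : ℕ), 1 ≤ t0 →
        (∀ i, (Finset.univ.filter (fun v => τ v = i)).card ≤ b) →
        (∀ k, (Finset.univ.filter (fun v => κ v = k)).card ≤ t0 * m) →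
        ∃ f : V → Fin m,
          (∀ v v', τ v' ≤ τ v + 1 → τ v ≤ τ v' + 1 → ∃ i, nb (f v) i = f v') ∧
          ∀ k u, (Finset.univ.filter (fun v => κ v = k ∧ f v = u)).card ≤ C * t0) (hm : 1 ≤ m)
    (N : ℕ) : ∀ (ι : Type) [DecidableEq ι] (κ : V → ι) (τ : Fin N → V → ℕ) (t0 : ℕ), 1 ≤ t0 →
        (∀ i j, (Finset.univ.filter (fun v => τ i v = j)).card ≤ b) →
        (∀ k, (Finset.univ.filter (fun v => κ v = k)).card ≤ t0 * m ^ N) →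
        ∃ f : Fin N → V → Fin m,
          (∀ i v v', τ i v' ≤ τ i v + 1 → τ i v ≤ τ i v' + 1 → ∃ l, nb (f i v) l = f i v') ∧
          ∀ k (x : Fin N → Fin m),
            (Finset.univ.filter (fun v => κ v = k ∧ ∀ i, f i v = x i)).card ≤ C ^ N * t0 := by
  induction N with
  | zero =>
    intro ι _ κ τ t0 _ _ hκ
    refine ⟨fun i => i.elim0, fun i => i.elim0, fun k x => ?_⟩
    simpa using hκ k
  | succ N ih =>
    intro ι _ κ τ t0 ht0 hτ hκ
    obtain ⟨f0, hf0, hf0c⟩ := h ι κ (τ 0) (t0 * m ^ N) (Nat.mul_pos ht0 (pow_pos hm N)) (hτ 0)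
      (fun k => (hκ k).trans (le_of_eq (by ring)))
    obtain ⟨f, hf, hfc⟩ := ih (ι × Fin m) (fun v => (κ v, f0 v)) (fun i => τ i.succ) (C * t0)
      (Nat.mul_pos hC ht0) (fun i => hτ i.succ) (fun k => by
        refine le_trans (le_of_eq ?_) ((hf0c k.1 k.2).trans (le_of_eq (by ring)))
        congr 1
        ext v
        simp [Prod.ext_iff])
    refine ⟨Fin.cons f0 f, ?_, ?_⟩
    · intro i
      refine Fin.cases ?_ (fun i => ?_) i
      · exact hf0
      · exact hf i
    · intro k x
      refine le_trans (le_of_eq ?_) ((hfc (k, x 0) (fun i => x i.succ)).trans (le_of_eq (by ring)))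
      congr 1
      ext v
      simp [Prod.ext_iff, Fin.forall_fin_succ, and_assoc]

/-- A map with fibres of size at most `C0` becomes injective after adding a label in `Fin C0`. -/
lemma exists_injective_refinement {V X : Type} [Fintype V] [DecidableEq X] (F : V → X)
    (C0 : ℕ) (h : ∀ x, (Finset.univ.filter (fun v => F v = x)).card ≤ C0) :
    ∃ l : V → Fin C0, Function.Injective (fun v => (F v, l v)) := by
  have hemb : ∀ x, Nonempty ({v // F v = x} ↪ Fin C0) := fun x => by
    apply Function.Embedding.nonempty_of_card_le
    rw [Fintype.card_subtype, Fintype.card_fin]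
    exact h x
  have e := fun x => Classical.choice (hemb x)
  refine ⟨fun v => e (F v) ⟨v, rfl⟩, fun v w hvw => ?_⟩
  rw [Prod.mk.injEq] at hvw
  obtain ⟨h1, h2⟩ := hvw
  have aux : ∀ x (hx : F w = x), e (F w) ⟨w, rfl⟩ = e x ⟨w, hx⟩ := by
    rintro x rfl; rfl
  dsimp only at h2
  rw [aux _ h1.symm] at h2
  simpa using (e (F v)).injective h2

/-- Parameters describing an edge of the host: for each coordinate `i` and each vertex `a` of the
edge, a slot in `Fin K`; the values in `Fin m` of the slots; the label of the neighbour of the slot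
value that is the `i`-th coordinate of `a`; and the last coordinate of each vertex. -/
abbrev HostParam (r N K m d C0 : ℕ) : Type :=
  (Fin N → Fin r → Fin K) × (Fin K → Fin m) × (Fin N → Fin r → Fin d) × (Fin r → Fin C0)

/-- The host vertex that a parameter assigns to the `a`-th vertex of the edge. -/
def hostVertex {r N K m d C0 : ℕ} (nb : Fin m → Fin d → Fin m) (p : HostParam r N K m d C0)
    (a : Fin r) : (Fin N → Fin m) × Fin C0 :=
  (fun i => nb (p.2.1 (p.1 i a)) (p.2.2.1 i a), p.2.2.2 a)

/-- The edges of the host: all `r`-element sets arising from some parameter. -/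
def hostEdges (r N K C0 : ℕ) {m d : ℕ} (nb : Fin m → Fin d → Fin m) :
    Finset (Finset ((Fin N → Fin m) × Fin C0)) :=
  (Finset.univ.image (fun p : HostParam r N K m d C0 =>
    Finset.univ.image (hostVertex nb p))).filter (fun e => e.card = r)

/-- The number of parameters. Only the factor `m ^ K`, coming from the slot values, is unbounded. -/
lemma card_hostEdges_le (r N K C0 : ℕ) {m d : ℕ} (nb : Fin m → Fin d → Fin m) :
    (hostEdges r N K C0 nb).card ≤ (K ^ r) ^ N * (m ^ K * ((d ^ r) ^ N * C0 ^ r)) := by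
  refine (Finset.card_filter_le _ _).trans (Finset.card_image_le.trans ?_)
  simp [Finset.card_univ, Fintype.card_prod]

/-- Coordinate functions with bounded fibres, adjacent along the sets `S i`, embed `EF` in the host:
the slots of an edge are the pairs `(i, s)` with `s ∈ S i`. -/
lemma exists_host_embedding {r n N K C0 m d : ℕ} (hm : 0 < m) (nb : Fin m → Fin d → Fin m)
    (EF : Finset (Finset (Fin n))) (hr : ∀ e ∈ EF, e.card = r) (f : Fin N → Fin n → Fin m)
    (hf : ∀ x : Fin N → Fin m, (Finset.univ.filter (fun v => ∀ i, f i v = x i)).card ≤ C0)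
    (hS : ∀ e ∈ EF, ∃ S : Fin N → Finset (Fin n), ∑ i, (S i).card ≤ K ∧
      ∀ i, ∀ v ∈ e, ∃ s ∈ S i, ∃ l, nb (f i s) l = f i v) :
    ∃ φ : Fin n → (Fin N → Fin m) × Fin C0, Function.Injective φ ∧
      ∀ e ∈ EF, e.image φ ∈ hostEdges r N K C0 nb := by
  obtain ⟨l, hl⟩ := exists_injective_refinement (fun v => fun i => f i v) C0 (fun x => by
    refine le_trans (le_of_eq ?_) (hf x)
    congr 1; ext v; simp [funext_iff])
  refine ⟨_, hl, fun e he => ?_⟩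
  rw [hostEdges, Finset.mem_filter, Finset.card_image_of_injective _ hl]
  refine ⟨?_, hr e he⟩
  obtain ⟨S, hSK, hSe⟩ := hS e he
  obtain ⟨emb⟩ : Nonempty ((Σ i : Fin N, (S i : Type)) ↪ Fin K) := by
    apply Function.Embedding.nonempty_of_card_le
    simpa [Fintype.card_sigma] using hSK
  let en := (e.equivFinOfCardEq (hr e he)).symm
  have hch : ∀ i (a : Fin r), ∃ s : S i, ∃ t, nb (f i s) t = f i (en a) := by
    intro i a
    obtain ⟨s, hs, t, ht⟩ := hSe i (en a) (en a).2
    exact ⟨⟨s, hs⟩, t, ht⟩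
  choose s t hst using hch
  have : Nonempty (Fin m) := ⟨⟨0, hm⟩⟩
  rw [Finset.mem_image]
  refine ⟨(fun i a => emb ⟨i, s i a⟩,
    Function.extend emb (fun p => f p.1 p.2) (fun _ => Classical.arbitrary _), t,
    fun a => l (en a)), Finset.mem_univ _, ?_⟩
  have hv : ∀ a : Fin r, hostVertex nb ((fun i a => emb ⟨i, s i a⟩,
      Function.extend emb (fun p => f p.1 p.2) (fun _ => Classical.arbitrary _), t,
      fun a => l (en a)) : HostParam r N K m d C0) a
      = ((fun i => f i (en a)), l (en a)) := by
    intro a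
    simp only [hostVertex, emb.injective.extend_apply, hst]
  ext y
  simp only [Finset.mem_image, Finset.mem_univ, true_and, hv]
  constructor
  · rintro ⟨a, rfl⟩
    exact ⟨en a, (en a).2, rfl⟩
  · rintro ⟨v, hve, rfl⟩
    refine ⟨en.symm ⟨v, hve⟩, ?_⟩
    simp

/-- Universal hypergraphs from traversals: if every member of the family has `N` functions `τ i` with
bounded fibres such that each edge is covered, coordinate by coordinate, by at most `K` of its
`τ i`-neighbourhoods in total, then `O(n)` vertices and `O(n ^ (K / N))` edges suffice. -/
theorem universal_of_traversals (r Δ N K b : ℕ) (hN : 1 ≤ N) (hb : 1 ≤ b) (x : ℝ)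
    (hx : (K : ℝ) / N ≤ x)
    (H : ∀ (n : ℕ) (EF : Finset (Finset (Fin n))), (∀ e ∈ EF, e.card = r) →
      (∀ v : Fin n, (EF.filter (fun e => v ∈ e)).card ≤ Δ) →
      ∃ τ : Fin N → Fin n → ℕ,
        (∀ i j, (Finset.univ.filter (fun v => τ i v = j)).card ≤ b) ∧
        ∀ e ∈ EF, ∃ S : Fin N → Finset (Fin n), ∑ i, (S i).card ≤ K ∧
          ∀ i, ∀ v ∈ e, ∃ s ∈ S i, τ i v ≤ τ i s + 1 ∧ τ i s ≤ τ i v + 1) :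
    ∃ C : ℝ, 0 < C ∧ ∀ n : ℕ, 1 ≤ n →
      ∃ (M : ℕ) (EH : Finset (Finset (Fin M))),
        (∀ e ∈ EH, e.card = r) ∧ (M : ℝ) ≤ C * n ∧
        (EH.card : ℝ) ≤ C * (n : ℝ) ^ x ∧ HypergraphUniversal r n Δ M EH := by
  classical
  -- the constants are made opaque to keep arithmetic tactics from evaluating `2 ^ 25`
  obtain ⟨d, hd⟩ : ∃ d, d = 13 + 12 * 2 ^ 25 := ⟨_, rfl⟩
  obtain ⟨c, hc⟩ : ∃ c, c = b * 2 ^ 25 + 2 * b := ⟨_, rfl⟩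
  have hc1 : 1 ≤ c := by omega
  have hNpos : (0 : ℝ) < N := by exact_mod_cast hN
  set c1 : ℝ := ((2 : ℝ) ^ 26) ^ N * (c ^ N : ℕ) with hc1d
  set c2 : ℝ := (K ^ r) ^ N * (((2 : ℝ) ^ 26) ^ K * ((d ^ r) ^ N * ((c ^ N : ℕ) : ℝ) ^ r)) with hc2d
  have hc10 : 0 ≤ c1 := by positivity
  have hc20 : 0 ≤ c2 := by positivity
  refine ⟨c1 + c2 + 1, by positivity, fun n hn => ?_⟩
  have hn1 : (1 : ℝ) ≤ n := by exact_mod_cast hn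
  have hn0 : (0 : ℝ) ≤ n := by linarith
  obtain ⟨θ, hθd⟩ : ∃ θ, θ = ⌈(n : ℝ) ^ ((1 : ℝ) / N)⌉₊ := ⟨_, rfl⟩
  have hroot : (1 : ℝ) ≤ (n : ℝ) ^ ((1 : ℝ) / N) := Real.one_le_rpow hn1 (by positivity)
  have hθ1 : 1 ≤ θ := by
    rw [hθd]; exact Nat.one_le_ceil_iff.mpr (by linarith)
  have hθle : (θ : ℝ) ≤ 2 * (n : ℝ) ^ ((1 : ℝ) / N) := by
    have := Nat.ceil_lt_add_one (show (0 : ℝ) ≤ (n : ℝ) ^ ((1 : ℝ) / N) by linarith)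
    rw [← hθd] at this
    linarith
  have hrootN : ((n : ℝ) ^ ((1 : ℝ) / N)) ^ N = n := by
    rw [← Real.rpow_natCast, ← Real.rpow_mul hn0, one_div, inv_mul_cancel₀ hNpos.ne', Real.rpow_one]
  have hnθ : n ≤ θ ^ N := by
    have : (n : ℝ) ≤ (θ : ℝ) ^ N := by
      rw [← hrootN]
      refine pow_le_pow_left₀ (by positivity) ?_ N
      rw [hθd]; exact Nat.le_ceil _
    exact_mod_cast this
  obtain ⟨m, hm⟩ : ∃ m, m = 2 ^ 25 * θ := ⟨_, rfl⟩
  have hcoord := exists_coordinate θ hθ1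
  rw [← hd, ← hm] at hcoord
  obtain ⟨nb, hnb⟩ := hcoord
  have hm1 : 1 ≤ m := by omega
  have hmle : (m : ℝ) ≤ 2 ^ 26 * (n : ℝ) ^ ((1 : ℝ) / N) := by
    rw [hm]; push_cast; nlinarith
  have hmN : (m : ℝ) ^ N ≤ (2 ^ 26) ^ N * n := by
    calc (m : ℝ) ^ N ≤ (2 ^ 26 * (n : ℝ) ^ ((1 : ℝ) / N)) ^ N :=
          pow_le_pow_left₀ (by positivity) hmle N
      _ = _ := by rw [mul_pow, hrootN]
  have hmK : (m : ℝ) ^ K ≤ (2 ^ 26) ^ K * (n : ℝ) ^ x := by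
    calc (m : ℝ) ^ K ≤ (2 ^ 26 * (n : ℝ) ^ ((1 : ℝ) / N)) ^ K :=
          pow_le_pow_left₀ (by positivity) hmle K
      _ = (2 ^ 26) ^ K * (n : ℝ) ^ ((K : ℝ) / N) := by
          rw [mul_pow, ← Real.rpow_natCast ((n : ℝ) ^ ((1 : ℝ) / N)), ← Real.rpow_mul hn0]
          congr 2; ring
      _ ≤ _ := by
          refine mul_le_mul_of_nonneg_left (Real.rpow_le_rpow_of_exponent_le hn1 hx) (by positivity)
  let eqv := Fintype.equivFin ((Fin N → Fin m) × Fin (c ^ N))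
  refine ⟨Fintype.card ((Fin N → Fin m) × Fin (c ^ N)),
    (hostEdges r N K (c ^ N) nb).image (fun e => e.image eqv), ?_, ?_, ?_, ?_⟩
  · intro e he
    rw [Finset.mem_image] at he
    obtain ⟨e', he', rfl⟩ := he
    rw [Finset.card_image_of_injective _ eqv.injective]
    exact (Finset.mem_filter.mp he').2
  · have : ((Fintype.card ((Fin N → Fin m) × Fin (c ^ N)) : ℕ) : ℝ) = (m : ℝ) ^ N * (c ^ N : ℕ) := by
      simp
    rw [this]
    calc (m : ℝ) ^ N * (c ^ N : ℕ) ≤ ((2 ^ 26) ^ N * n) * (c ^ N : ℕ) :=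
          mul_le_mul_of_nonneg_right hmN (by positivity)
      _ = c1 * n := by rw [hc1d]; ring
      _ ≤ _ := mul_le_mul_of_nonneg_right (by linarith) hn0
  · have h1 : ((((hostEdges r N K (c ^ N) nb).image (fun e => e.image eqv)).card : ℕ) : ℝ)
        ≤ (K ^ r) ^ N * ((m : ℝ) ^ K * ((d ^ r) ^ N * ((c ^ N : ℕ) : ℝ) ^ r)) := by
      have := (Finset.card_image_le (s := hostEdges r N K (c ^ N) nb)
        (f := fun e => e.image eqv)).trans (card_hostEdges_le r N K (c ^ N) nb)
      exact_mod_cast this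
    refine h1.trans ?_
    calc (K ^ r : ℝ) ^ N * ((m : ℝ) ^ K * ((d ^ r) ^ N * ((c ^ N : ℕ) : ℝ) ^ r))
        ≤ (K ^ r : ℝ) ^ N * (((2 ^ 26) ^ K * (n : ℝ) ^ x) * ((d ^ r) ^ N * ((c ^ N : ℕ) : ℝ) ^ r)) := by
          gcongr
      _ = c2 * (n : ℝ) ^ x := by rw [hc2d]; ring
      _ ≤ _ := mul_le_mul_of_nonneg_right (by linarith) (by positivity)
  · intro EF hr hΔ
    obtain ⟨τ, hτ, hS⟩ := H n EF hr hΔ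
    obtain ⟨f, hf, hfc⟩ := exists_coordinates hc1 nb (Fin n) (fun ι _ κ τ t0 h1 h2 h3 => by
      rw [hc]; exact hnb b hb (Fin n) ι κ τ t0 h1 h2 h3) hm1 N Unit (fun _ => ()) τ 1 le_rfl hτ
      (fun k => by
        refine (Finset.card_le_univ _).trans ?_
        rw [Fintype.card_fin, one_mul]
        refine hnθ.trans (Nat.pow_le_pow_left ?_ N)
        rw [hm]; exact Nat.le_mul_of_pos_left _ (by norm_num))
    obtain ⟨φ, hφ, hφe⟩ := exists_host_embedding (K := K) (C0 := c ^ N) hm1 nb EF hr f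
      (fun x => by simpa using hfc () x) (fun e he => by
        obtain ⟨S, hSK, hSe⟩ := hS e he
        refine ⟨S, hSK, fun i v hv => ?_⟩
        obtain ⟨s, hs, h1, h2⟩ := hSe i v hv
        exact ⟨s, hs, hf i s v h1 h2⟩)
    refine ⟨fun v => eqv (φ v), eqv.injective.comp hφ, fun e he => ?_⟩
    rw [Finset.mem_image]
    exact ⟨_, hφe e he, by rw [Finset.image_image]; rfl⟩

/-! ### Edge colourings of bipartite multigraphs -/

/-- König's edge colouring theorem for a `k`-regular bipartite multigraph with edge set `X` and both
sides equal to `V`. By Hall's theorem there is a perfect matching; it receives the last colour. -/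
lemma konig_regular {V : Type*} [Fintype V] [DecidableEq V] (k : ℕ) :
    ∀ {X : Type} [Fintype X] [DecidableEq X] (s t : X → V),
      (∀ v, (Finset.univ.filter (fun x => s x = v)).card = k) →
      (∀ v, (Finset.univ.filter (fun x => t x = v)).card = k) →
      ∃ c : X → Fin k, ∀ x y, x ≠ y → (s x = s y ∨ t x = t y) → c x ≠ c y := by
  induction k with
  | zero =>
    intro X _ _ s t hs _
    have : IsEmpty X := ⟨fun x => by
      have := hs (s x)
      rw [Finset.card_eq_zero] at this
      have hx : x ∈ Finset.univ.filter (fun y => s y = s x) := by simp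
      rw [this] at hx
      simp at hx⟩
    exact ⟨fun x => isEmptyElim x, fun x => isEmptyElim x⟩
  | succ k ih =>
    intro X _ _ s t hs ht
    have hall : ∃ M : V → V, Function.Injective M ∧
        ∀ v, M v ∈ (Finset.univ.filter (fun x => s x = v)).image t := by
      rw [← Finset.all_card_le_biUnion_card_iff_exists_injective]
      intro S
      set W := S.biUnion (fun v => (Finset.univ.filter (fun x => s x = v)).image t) with hW
      have h1 : (Finset.univ.filter (fun x => s x ∈ S)).card = S.card * (k + 1) := by
        rw [Finset.card_eq_sum_card_fiberwise (f := s) (t := S)]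
        · rw [Finset.sum_const_nat]
          intro v hv
          rw [← hs v]
          congr 1
          ext x
          simp only [Finset.mem_filter, Finset.mem_univ, true_and]
          constructor
          · exact fun h => h.2
          · exact fun h => ⟨h ▸ hv, h⟩
        · intro x hx
          simpa using hx
      have h2 : (Finset.univ.filter (fun x => t x ∈ W)).card = W.card * (k + 1) := by
        rw [Finset.card_eq_sum_card_fiberwise (f := t) (t := W)]
        · rw [Finset.sum_const_nat]
          intro v hv
          rw [← ht v]
          congr 1
          ext x
          simp only [Finset.mem_filter, Finset.mem_univ, true_and]
          constructor
          · exact fun h => h.2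
          · exact fun h => ⟨h ▸ hv, h⟩
        · intro x hx
          simpa using hx
      have h3 : (Finset.univ.filter (fun x => s x ∈ S)).card
          ≤ (Finset.univ.filter (fun x => t x ∈ W)).card := by
        refine Finset.card_le_card (fun x hx => ?_)
        simp only [Finset.mem_filter, Finset.mem_univ, true_and] at hx ⊢
        rw [hW, Finset.mem_biUnion]
        exact ⟨s x, hx, Finset.mem_image_of_mem _ (by simp)⟩
      rw [h1, h2] at h3
      exact Nat.le_of_mul_le_mul_right h3 (Nat.succ_pos k)
    obtain ⟨M, hM, hMe⟩ := hall
    have hMb : Function.Bijective M := Finite.injective_iff_bijective.mp hM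
    simp only [Finset.mem_image, Finset.mem_filter, Finset.mem_univ, true_and] at hMe
    choose e hse hte using hMe
    obtain ⟨c, hc⟩ := ih (X := {x : X // ∀ v, e v ≠ x}) (fun x => s x.1) (fun x => t x.1) (by
      intro v
      have : (Finset.univ.filter (fun x : {x : X // ∀ v, e v ≠ x} => s x.1 = v)).map
          (Function.Embedding.subtype _) = (Finset.univ.filter (fun x => s x = v)).erase (e v) := by
        ext x
        simp only [Finset.mem_map, Finset.mem_filter, Finset.mem_univ, true_and,
          Function.Embedding.subtype_apply, Subtype.exists, exists_and_left, exists_prop,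
          Finset.mem_erase]
        constructor
        · rintro ⟨y, hy, hy', rfl⟩
          exact ⟨(hy' v).symm, hy⟩
        · rintro ⟨h1, h2⟩
          refine ⟨x, h2, fun w hw => ?_, rfl⟩
          have : w = v := by rw [← hse w, hw, h2]
          exact h1 (by rw [← hw, this])
      rw [← Finset.card_map, this, Finset.card_erase_of_mem (by simp [hse]), hs]
      rfl) (by
      intro u
      obtain ⟨v, rfl⟩ := hMb.2 u
      have : (Finset.univ.filter (fun x : {x : X // ∀ v, e v ≠ x} => t x.1 = M v)).map
          (Function.Embedding.subtype _)
            = (Finset.univ.filter (fun x => t x = M v)).erase (e v) := by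
        ext x
        simp only [Finset.mem_map, Finset.mem_filter, Finset.mem_univ, true_and,
          Function.Embedding.subtype_apply, Subtype.exists, exists_and_left, exists_prop,
          Finset.mem_erase]
        constructor
        · rintro ⟨y, hy, hy', rfl⟩
          exact ⟨(hy' v).symm, hy⟩
        · rintro ⟨h1, h2⟩
          refine ⟨x, h2, fun w hw => ?_, rfl⟩
          have : w = v := hM (by rw [← hte w, hw, h2])
          exact h1 (by rw [← hw, this])
      rw [← Finset.card_map, this, Finset.card_erase_of_mem (by simp [hte]), ht]
      rfl)
    classical
    refine ⟨fun x => if h : ∀ v, e v ≠ x then (c ⟨x, h⟩).castSucc else Fin.last k, ?_⟩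
    intro x y hxy hst
    dsimp only
    split_ifs with hx hy hy
    · intro h
      exact hc ⟨x, hx⟩ ⟨y, hy⟩ (by simpa using hxy) hst (Fin.castSucc_injective _ h)
    · exact (Fin.castSucc_lt_last _).ne
    · exact (Fin.castSucc_lt_last _).ne'
    · push Not at hx hy
      obtain ⟨v, rfl⟩ := hx
      obtain ⟨w, rfl⟩ := hy
      rw [hse, hse, hte, hte] at hst
      rcases hst with h | h
      · exact (hxy (by rw [h])).elim
      · exact (hxy (by rw [hM h])).elim

/-- König's edge colouring theorem: the edges `X` of a bipartite multigraph with ends `s` and `t` and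
maximum degree at most `k` can be properly coloured with `k` colours. -/
lemma konig {X A B : Type} [Fintype X] [Fintype A] [Fintype B] [DecidableEq X] [DecidableEq A]
    [DecidableEq B] (k : ℕ) (s : X → A) (t : X → B)
    (hs : ∀ a, (Finset.univ.filter (fun x => s x = a)).card ≤ k)
    (ht : ∀ b, (Finset.univ.filter (fun x => t x = b)).card ≤ k) :
    ∃ c : X → Fin k, ∀ x y, x ≠ y → (s x = s y ∨ t x = t y) → c x ≠ c y := by
  -- two copies of the graph, glued with exchanged sides; joining the copies of a vertex by parallel
  -- edges makes the union `k`-regular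
  let dg : A ⊕ B → ℕ := Sum.elim (fun a => (Finset.univ.filter (fun x => s x = a)).card)
    (fun b => (Finset.univ.filter (fun x => t x = b)).card)
  let s' : (X ⊕ X) ⊕ (Σ v : A ⊕ B, Fin (k - dg v)) → A ⊕ B :=
    Sum.elim (Sum.elim (fun x => Sum.inl (s x)) (fun x => Sum.inr (t x))) (fun p => p.1)
  let t' : (X ⊕ X) ⊕ (Σ v : A ⊕ B, Fin (k - dg v)) → A ⊕ B :=
    Sum.elim (Sum.elim (fun x => Sum.inr (t x)) (fun x => Sum.inl (s x))) (fun p => p.1)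
  obtain ⟨c, hc⟩ := konig_regular k s' t' (by
    rintro (a | b)
    · have : dg (Sum.inl a) ≤ k := hs a
      have hd : dg (Sum.inl a) = (Finset.univ.filter (fun x => s x = a)).card := rfl
      rw [Finset.card_filter, Fintype.sum_sum_type, Fintype.sum_sum_type, Fintype.sum_sigma]
      simp only [s', Sum.elim_inl, Sum.elim_inr, Sum.inl.injEq, reduceCtorEq, if_false,
        Finset.sum_const_zero, ← Finset.card_filter, Fintype.sum_sum_type, Finset.sum_const,
        Finset.card_univ, Fintype.card_fin, smul_eq_mul, mul_ite, mul_one, mul_zero,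
        Finset.sum_ite_eq', Finset.mem_univ, if_true]
      omega
    · have : dg (Sum.inr b) ≤ k := ht b
      have hd : dg (Sum.inr b) = (Finset.univ.filter (fun x => t x = b)).card := rfl
      rw [Finset.card_filter, Fintype.sum_sum_type, Fintype.sum_sum_type, Fintype.sum_sigma]
      simp only [s', Sum.elim_inl, Sum.elim_inr, Sum.inr.injEq, reduceCtorEq, if_false,
        Finset.sum_const_zero, ← Finset.card_filter, Fintype.sum_sum_type, Finset.sum_const,
        Finset.card_univ, Fintype.card_fin, smul_eq_mul, mul_ite, mul_one, mul_zero,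
        Finset.sum_ite_eq', Finset.mem_univ, if_true]
      omega) (by
    rintro (a | b)
    · have : dg (Sum.inl a) ≤ k := hs a
      have hd : dg (Sum.inl a) = (Finset.univ.filter (fun x => s x = a)).card := rfl
      rw [Finset.card_filter, Fintype.sum_sum_type, Fintype.sum_sum_type, Fintype.sum_sigma]
      simp only [t', Sum.elim_inl, Sum.elim_inr, Sum.inl.injEq, reduceCtorEq, if_false,
        Finset.sum_const_zero, ← Finset.card_filter, Fintype.sum_sum_type, Finset.sum_const,
        Finset.card_univ, Fintype.card_fin, smul_eq_mul, mul_ite, mul_one, mul_zero,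
        Finset.sum_ite_eq', Finset.mem_univ, if_true]
      omega
    · have : dg (Sum.inr b) ≤ k := ht b
      have hd : dg (Sum.inr b) = (Finset.univ.filter (fun x => t x = b)).card := rfl
      rw [Finset.card_filter, Fintype.sum_sum_type, Fintype.sum_sum_type, Fintype.sum_sigma]
      simp only [t', Sum.elim_inl, Sum.elim_inr, Sum.inr.injEq, reduceCtorEq, if_false,
        Finset.sum_const_zero, ← Finset.card_filter, Fintype.sum_sum_type, Finset.sum_const,
        Finset.card_univ, Fintype.card_fin, smul_eq_mul, mul_ite, mul_one, mul_zero,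
        Finset.sum_ite_eq', Finset.mem_univ, if_true]
      omega)
  refine ⟨fun x => c (Sum.inl (Sum.inl x)), fun x y hxy hst => hc _ _ (by simpa using hxy) ?_⟩
  simpa [s', t'] using hst

/-! ### Folding and cutting functional graphs -/

/-- Distances along `p` to a set of base points. The distance drops by one in each step outside
the base, and a base point returns to itself at the first base point after it. The base is a
smallest set meeting all orbits, that is, one point on each cycle. -/
lemma exists_baseDist {V : Type} [Fintype V] (p : V → V) :
    ∃ d : V → ℕ, (∀ v, d v ≠ 0 → d v = d (p v) + 1) ∧ ∀ v, d v = 0 → p^[d (p v)] (p v) = v := by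
  classical
  obtain ⟨Bs, hBs, hmin⟩ := Finset.exists_min_image
    (Finset.univ.filter (fun B : Finset V => ∀ v, ∃ k, p^[k] v ∈ B)) Finset.card
    ⟨Finset.univ, by simp⟩
  simp only [Finset.mem_filter, Finset.mem_univ, true_and] at hBs hmin
  refine ⟨fun v => Nat.find (hBs v), fun v hv => ?_, fun v hv => ?_⟩
  · have hv0 : v ∉ Bs := fun h => hv (by simpa [Nat.find_eq_zero] using h)
    refine le_antisymm (Nat.find_min' _ ?_) ?_
    · rw [Function.iterate_succ_apply]
      exact Nat.find_spec (hBs (p v))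
    · obtain ⟨k, hk⟩ := Nat.exists_eq_succ_of_ne_zero hv
      dsimp only at hk ⊢
      have := Nat.find_spec (hBs v)
      rw [hk, Nat.succ_eq_add_one, Function.iterate_succ_apply] at this
      rw [hk]
      exact Nat.succ_le_succ (Nat.find_min' _ this)
  · have hvB : v ∈ Bs := by simpa [Nat.find_eq_zero] using hv
    -- minimality gives a vertex whose orbit meets `Bs` only in `v`
    have : ∃ u, ∀ k, p^[k] u ∈ Bs → p^[k] u = v := by
      by_contra hcon
      push Not at hcon
      have := hmin (Bs.erase v) (fun u => by
        obtain ⟨k, hk1, hk2⟩ := hcon u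
        exact ⟨k, Finset.mem_erase.mpr ⟨hk2, hk1⟩⟩)
      have h2 := Finset.card_erase_lt_of_mem hvB
      omega
    obtain ⟨u, hu⟩ := this
    obtain ⟨k, hk⟩ := hBs u
    have h1 := hu k hk
    have h2 := Nat.find_spec (hBs (p v))
    have h3 : p^[Nat.find (hBs (p v))] (p v) = p^[Nat.find (hBs (p v)) + 1 + k] u := by
      rw [Function.iterate_add_apply, h1, Function.iterate_succ_apply]
    dsimp only
    rw [h3] at h2 ⊢
    exact hu _ h2

lemma baseDist_iterate {V : Type} {p : V → V} {d : V → ℕ} (h1 : ∀ v, d v ≠ 0 → d v = d (p v) + 1)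
    (v : V) : ∀ k ≤ d v, d (p^[k] v) = d v - k := by
  intro k
  induction k with
  | zero => simp
  | succ k ih =>
    intro hk
    have h2 := ih (by omega)
    have h3 := h1 (p^[k] v) (by omega)
    rw [Function.iterate_succ_apply']
    omega

/-- Folding the cycles of a permutation: the base points of different cycles are sent far apart,
and a point at distance `d` to the base point of its cycle of length `P` is placed at
`min d (P - d)` from it. -/
lemma exists_fold {V : Type} [Fintype V] [DecidableEq V] (p : V → V) (hp : Function.Injective p) :
    ∃ τ : V → ℕ, (∀ j, (Finset.univ.filter (fun v => τ v = j)).card ≤ 2) ∧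
      ∀ v, τ (p v) ≤ τ v + 1 ∧ τ v ≤ τ (p v) + 1 := by
  obtain ⟨d, h1, h2⟩ := exists_baseDist p
  set bt : V → V := fun v => p^[d v] v with hbt
  have hbt1 : ∀ v, d v ≠ 0 → bt (p v) = bt v := by
    intro v hv
    simp only [hbt]
    rw [h1 v hv, Function.iterate_succ_apply]
  have hdb : ∀ v, d (bt v) = 0 := fun v => by
    simp only [hbt]; rw [baseDist_iterate h1 v _ le_rfl]; omega
  set P : V → ℕ := fun v => d (p (bt v)) + 1 with hP
  have hlt : ∀ v, d v < P v := by
    intro v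
    by_contra hcon
    push Not at hcon
    have e1 : p^[P v] (bt v) = bt v := by
      rw [hP, Function.iterate_succ_apply]; exact h2 _ (hdb v)
    have e2 : p^[P v] (p^[d v - P v] v) = p^[P v] (bt v) := by
      rw [e1, ← Function.iterate_add_apply]
      simp only [hbt]; congr 2; omega
    have e3 := (hp.iterate (P v)) e2
    have e4 := baseDist_iterate h1 v (d v - P v) (by omega)
    rw [e3, hdb] at e4
    have : 0 < P v := by simp [hP]
    omega
  obtain ⟨W, hW⟩ : ∃ W, W = Finset.univ.sup d + 1 := ⟨_, rfl⟩
  have hWd : ∀ v, min (d v) (P v - d v) < W := fun v => by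
    have : d v ≤ Finset.univ.sup d := Finset.le_sup (Finset.mem_univ v)
    omega
  set ix : V → ℕ := fun v => (Fintype.equivFin V (bt v)).1 with hix
  have hixinj : ∀ v w, ix v = ix w → bt v = bt w := fun v w h =>
    (Fintype.equivFin V).injective (Fin.ext h)
  refine ⟨fun v => W * ix v + min (d v) (P v - d v), fun j => ?_, fun v => ?_⟩
  · rcases (Finset.univ.filter
      (fun v => W * ix v + min (d v) (P v - d v) = j)).eq_empty_or_nonempty with h | ⟨v0, hv0⟩
    · rw [h]; simp
    simp only [Finset.mem_filter, Finset.mem_univ, true_and] at hv0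
    have hmain : ∀ v, W * ix v + min (d v) (P v - d v) = j →
        bt v = bt v0 ∧ (d v = d v0 ∨ d v = P v0 - d v0) := by
      intro v hv
      have e : ix v = ix v0 := by
        have a1 : (W * ix v + min (d v) (P v - d v)) / W = ix v := by
          rw [Nat.mul_add_div (by omega), Nat.div_eq_of_lt (hWd v), add_zero]
        have a2 : (W * ix v0 + min (d v0) (P v0 - d v0)) / W = ix v0 := by
          rw [Nat.mul_add_div (by omega), Nat.div_eq_of_lt (hWd v0), add_zero]
        rw [← a1, ← a2, hv, hv0]
      have eb := hixinj _ _ e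
      refine ⟨eb, ?_⟩
      have hPP : P v = P v0 := by simp only [hP, eb]
      rw [← hv0, e] at hv
      have := hlt v
      have := hlt v0
      omega
    refine (Finset.card_le_card_of_injOn (t := {d v0, P v0 - d v0}) d ?_ ?_).trans
      Finset.card_le_two
    · intro v hv
      have := (hmain v (by simpa using hv)).2
      simpa using this
    · intro v hv w hw hvw
      have a1 := (hmain v (by simpa using hv)).1
      have a2 := (hmain w (by simpa using hw)).1
      have : p^[d v] v = p^[d v] w := by
        have : bt v = bt w := a1.trans a2.symm
        simp only [hbt] at this
        rw [this, hvw]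
      exact hp.iterate _ this
  · by_cases hv : d v = 0
    · have hbv : bt v = v := by simp [hbt, hv]
      have hbp : bt (p v) = v := h2 v hv
      have e1 : ix (p v) = ix v := by simp only [hix, hbp, hbv]
      have e2 : P (p v) = d (p v) + 1 := by simp only [hP, hbp]
      dsimp only
      rw [e1]
      constructor <;> omega
    · have e0 := hbt1 v hv
      have e1 : ix (p v) = ix v := by simp only [hix, e0]
      have e2 : P (p v) = P v := by simp only [hP, e0]
      have e3 := h1 v hv
      dsimp only
      rw [e1, e2]
      constructor <;> omega

lemma card_iterate_preimage_le {V : Type} [Fintype V] [DecidableEq V] (p : V → V) (R : ℕ)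
    (hR : ∀ y, (Finset.univ.filter (fun v => p v = y)).card ≤ R) (k : ℕ) (y : V) :
    (Finset.univ.filter (fun v => p^[k] v = y)).card ≤ R ^ k := by
  induction k with
  | zero =>
    rw [pow_zero, Finset.card_le_one]
    intro a ha b hb
    exact (Finset.mem_filter.mp ha).2.trans (Finset.mem_filter.mp hb).2.symm
  | succ k ih =>
    have : Finset.univ.filter (fun v => p^[k + 1] v = y) ⊆
        (Finset.univ.filter (fun v => p^[k] v = y)).biUnion
          (fun w => Finset.univ.filter (fun v => p v = w)) := by
      intro v hv
      have hv := (Finset.mem_filter.mp hv).2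
      rw [Function.iterate_succ_apply] at hv
      simp only [Finset.mem_biUnion, Finset.mem_filter, Finset.mem_univ, true_and]
      exact ⟨p v, hv, rfl⟩
    refine (Finset.card_le_card this).trans (Finset.card_biUnion_le.trans ?_)
    refine (Finset.sum_le_card_nsmul _ _ R (fun w _ => hR w)).trans ?_
    rw [smul_eq_mul, pow_succ]
    exact Nat.mul_le_mul_right _ ih

/-- Cutting a functional graph. For each `l`, the arcs leaving vertices of nonzero base distance
congruent to `l` modulo `L` are removed; `τ l` numbers the components, which are bounded. A vertex
is cut for at most one `l`. -/
lemma exists_cut {V : Type} [Fintype V] [DecidableEq V] (p : V → V) (L R : ℕ) (hL : 1 ≤ L)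
    (hR : ∀ y, (Finset.univ.filter (fun v => p v = y)).card ≤ R) :
    ∃ (cut : Fin L → V → Prop) (τ : Fin L → V → ℕ),
      (∀ v l l', cut l v → cut l' v → l = l') ∧ (∀ l v, ¬ cut l v → τ l (p v) = τ l v) ∧
      ∀ l j, (Finset.univ.filter (fun v => τ l v = j)).card
        ≤ ∑ k ∈ Finset.range (2 * L + 2), R ^ k := by
  obtain ⟨d, h1, h2⟩ := exists_baseDist p
  -- the number of uncut steps from distance `k` until the next cut vertex or base point
  set s : Fin L → ℕ → ℕ := fun l k => min k ((k + (L - l)) % L) with hs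
  have hs1 : ∀ (l : Fin L) (k : ℕ), (k + 1) % L ≠ l → s l (k + 1) = s l k + 1 := by
    intro l k hk
    have hl := l.2
    have h3 : (k + 1 + (L - l)) % L = (k + (L - l)) % L + 1 := by
      have hx := Nat.mod_lt (k + (L - l)) (show 0 < L by omega)
      have hq := Nat.div_add_mod (k + (L - l)) L
      have hx1 : (k + (L - l)) % L + 1 < L := by
        by_contra hcon
        refine hk ?_
        have e : k + 1 = l + L * ((k + (L - l)) / L) := by omega
        rw [e, Nat.add_mul_mod_self_left, Nat.mod_eq_of_lt hl]
      have e : k + 1 + (L - l) = ((k + (L - l)) % L + 1) + L * ((k + (L - l)) / L) := by omega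
      rw [e, Nat.add_mul_mod_self_left, Nat.mod_eq_of_lt hx1]
    simp only [hs, h3]
    omega
  have hsL : ∀ l k, s l k ≤ L := fun l k =>
    (min_le_right _ _).trans (Nat.mod_lt _ (by omega)).le
  have hsk : ∀ l k, s l k ≤ k := fun l k => min_le_left _ _
  set root : Fin L → V → V := fun l v => p^[s l (d v)] v with hroot
  -- a base point is continued along its outgoing arc, which is never cut
  set key : Fin L → V → V := fun l v =>
    if d (root l v) = 0 then root l (p (root l v)) else root l v with hkey
  refine ⟨fun l v => d v ≠ 0 ∧ d v % L = l, fun l v => Fintype.equivFin V (key l v), ?_, ?_, ?_⟩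
  · rintro v l l' ⟨-, h⟩ ⟨-, h'⟩
    exact Fin.ext (h.symm.trans h')
  · intro l v hv
    have : key l (p v) = key l v := by
      by_cases h0 : d v = 0
      · have r1 : root l v = v := by simp [hroot, hs, h0]
        have r2 : key l v = root l (p v) := by simp [hkey, r1, h0]
        rw [r2]
        by_cases h3 : d (root l (p v)) = 0
        · have h4 : root l (p v) = v := by
            have h5 := baseDist_iterate h1 (p v) _ (hsk l (d (p v)))
            have h6 : s l (d (p v)) = d (p v) := by
              have := hsk l (d (p v))
              simp only [hroot] at h3
              omega
            simp only [hroot, h6]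
            exact h2 v h0
          simp only [hkey]
          rw [if_pos h3]
          exact congrArg (fun x => root l (p x)) h4
        · simp only [hkey]
          rw [if_neg h3]
      · have h3 : d v % L ≠ l := fun h => hv ⟨h0, h⟩
        have h4 := h1 v h0
        have : root l v = root l (p v) := by
          simp only [hroot]
          rw [h4] at h3 ⊢
          rw [hs1 l _ h3, Function.iterate_succ_apply]
        simp only [hkey, this]
    simp only [this]
  · intro l j
    rcases (Finset.univ.filter
      (fun v => ((Fintype.equivFin V (key l v) : Fin _) : ℕ) = j)).eq_empty_or_nonempty with h | ⟨v0, hv0⟩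
    · rw [h]; simp
    simp only [Finset.mem_filter, Finset.mem_univ, true_and] at hv0
    have hsub : Finset.univ.filter (fun v => ((Fintype.equivFin V (key l v) : Fin _) : ℕ) = j) ⊆
        (Finset.range (2 * L + 2)).biUnion
          (fun k => Finset.univ.filter (fun v => p^[k] v = key l v0)) := by
      intro v hv
      simp only [Finset.mem_filter, Finset.mem_univ, true_and] at hv
      have hkk : key l v = key l v0 := (Fintype.equivFin V).injective (Fin.ext (hv.trans hv0.symm))
      simp only [Finset.mem_biUnion, Finset.mem_range, Finset.mem_filter, Finset.mem_univ, true_and]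
      rw [← hkk]
      by_cases h0 : d (root l v) = 0
      · refine ⟨s l (d (p (root l v))) + 1 + s l (d v), ?_, ?_⟩
        · have := hsL l (d v)
          have := hsL l (d (p (root l v)))
          omega
        · simp only [hkey]
          rw [if_pos h0, Function.iterate_add_apply, Function.iterate_succ_apply]
      · refine ⟨s l (d v), ?_, ?_⟩
        · have := hsL l (d v)
          omega
        · simp only [hkey]
          rw [if_neg h0]
    exact (Finset.card_le_card hsub).trans (Finset.card_biUnion_le.trans
      (Finset.sum_le_sum (fun k _ => card_iterate_preimage_le p R hR k _)))

/-! ### Traversals by cutting -/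

/-- Enumerations of the vertices of each edge. -/
lemma exists_enumeration {r n : ℕ} (EF : Finset (Finset (Fin n))) (hr : ∀ e ∈ EF, e.card = r) :
    ∃ en : {e // e ∈ EF} → Fin r → Fin n, (∀ e, Function.Injective (en e)) ∧
      ∀ e v, v ∈ e.1 ↔ ∃ a, en e a = v := by
  refine ⟨fun e a => ((e.1.equivFinOfCardEq (hr e.1 e.2)).symm a : Fin n), fun e a b h => ?_,
    fun e v => ⟨fun h => ⟨e.1.equivFinOfCardEq (hr e.1 e.2) ⟨v, h⟩, by simp⟩, ?_⟩⟩
  · exact (e.1.equivFinOfCardEq (hr e.1 e.2)).symm.injective (Subtype.ext h)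
  · rintro ⟨a, rfl⟩
    exact ((e.1.equivFinOfCardEq (hr e.1 e.2)).symm a).2

lemma card_incidences_le {r n Δ : ℕ} {EF : Finset (Finset (Fin n))}
    (hΔ : ∀ v : Fin n, (EF.filter (fun e => v ∈ e)).card ≤ Δ)
    {en : {e // e ∈ EF} → Fin r → Fin n} (hinj : ∀ e, Function.Injective (en e))
    (hmem : ∀ e v, v ∈ e.1 ↔ ∃ a, en e a = v) (v : Fin n) :
    (Finset.univ.filter (fun x : {e // e ∈ EF} × Fin r => en x.1 x.2 = v)).card ≤ Δ := by
  refine le_trans (Finset.card_le_card_of_injOn (fun x => x.1.1) ?_ ?_) (hΔ v)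
  · intro x hx
    have hx := (Finset.mem_filter.mp (Finset.mem_coe.mp hx)).2
    rw [Finset.mem_coe, Finset.mem_filter]
    exact ⟨x.1.2, (hmem _ _).mpr ⟨_, hx⟩⟩
  · intro x hx y hy hxy
    have hx := (Finset.mem_filter.mp (Finset.mem_coe.mp hx)).2
    have hy := (Finset.mem_filter.mp (Finset.mem_coe.mp hy)).2
    have h1 : x.1 = y.1 := Subtype.ext hxy
    refine Prod.ext h1 (hinj y.1 ?_)
    rw [hy, ← h1, hx]

/-- Traversals by cutting. The incidences are coloured with `Δ` colours, and a vertex of an edge is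
omitted from `S (i, l)` when its incidence has colour `i` and is not cut for `l`. -/
lemma traversals_cut {r Δ n : ℕ} (L : ℕ) (hr3 : 3 ≤ r) (hΔ2 : 2 ≤ Δ) (hL : 1 ≤ L)
    (EF : Finset (Finset (Fin n))) (hr : ∀ e ∈ EF, e.card = r)
    (hΔ : ∀ v : Fin n, (EF.filter (fun e => v ∈ e)).card ≤ Δ) :
    ∃ τ : Fin Δ × Fin L → Fin n → ℕ,
        (∀ i j, (Finset.univ.filter (fun v => τ i v = j)).card
          ≤ ∑ k ∈ Finset.range (2 * L + 2), (1 + Δ * r) ^ k) ∧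
        ∀ e ∈ EF, ∃ S : Fin Δ × Fin L → Finset (Fin n),
          ∑ i, (S i).card ≤ r * ((Δ - 1) * L + 1) ∧
          ∀ i, ∀ v ∈ e, ∃ s ∈ S i, τ i v ≤ τ i s + 1 ∧ τ i s ≤ τ i v + 1 := by
  classical
  obtain ⟨en, hinj, hmem⟩ := exists_enumeration EF hr
  -- incidences of an edge are grouped in blocks of at most `Δ`; the first block has at least two,
  -- so no edge is monochromatic
  obtain ⟨c, hc⟩ := konig (X := {e // e ∈ EF} × Fin r) Δ
    (fun x => (x.1, (⟨x.2 / Δ, (Nat.div_le_self _ _).trans_lt x.2.2⟩ : Fin r)))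
    (fun x => en x.1 x.2) (by
      intro y
      have : (Finset.univ.filter (fun x : {e // e ∈ EF} × Fin r =>
          (x.1, (⟨x.2 / Δ, (Nat.div_le_self _ _).trans_lt x.2.2⟩ : Fin r)) = y)).card
          ≤ (Finset.Ico (y.2.1 * Δ) (y.2.1 * Δ + Δ)).card := by
        refine Finset.card_le_card_of_injOn (fun x => x.2.1) ?_ ?_
        · intro x hx
          have hx := (Finset.mem_filter.mp (Finset.mem_coe.mp hx)).2
          have h2 : x.2.1 / Δ = y.2.1 := by rw [← hx]
          rw [Finset.mem_coe, Finset.mem_Ico]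
          have h3 := Nat.div_add_mod x.2.1 Δ
          have h4 := Nat.mod_lt x.2.1 (show 0 < Δ by omega)
          dsimp only
          rw [h2, mul_comm] at h3
          omega
        · intro x hx x' hx' h
          have hx := (Finset.mem_filter.mp (Finset.mem_coe.mp hx)).2
          have hx' := (Finset.mem_filter.mp (Finset.mem_coe.mp hx')).2
          refine Prod.ext ?_ (Fin.ext h)
          have := hx.trans hx'.symm
          exact (Prod.mk.inj this).1
      simpa using this)
    (card_incidences_le hΔ hinj hmem)
  have hc1 : ∀ x y : {e // e ∈ EF} × Fin r, en x.1 x.2 = en y.1 y.2 → c x = c y → x = y := by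
    intro x y h1 h2
    by_contra h3
    exact hc x y h3 (Or.inr h1) h2
  have hc2 : ∀ (e : {e // e ∈ EF}) (i : Fin Δ), ∃ a, c (e, a) ≠ i := by
    intro e i
    by_contra hcon
    push Not at hcon
    refine hc (e, ⟨0, by omega⟩) (e, ⟨1, by omega⟩) (by simp) (Or.inl ?_)
      ((hcon _).trans (hcon _).symm)
    simp [Nat.div_eq_of_lt (show 0 < Δ by omega), Nat.div_eq_of_lt (show 1 < Δ by omega)]
  let nxt : Fin r → Fin r := fun a => ⟨(a + 1) % r, Nat.mod_lt _ (by omega)⟩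
  have hp : ∀ i : Fin Δ, ∃ p : Fin n → Fin n, (∀ e a, c (e, a) = i → p (en e a) = en e (nxt a)) ∧
      ∀ y, (Finset.univ.filter (fun v => p v = y)).card ≤ 1 + Δ * r := by
    intro i
    let p : Fin n → Fin n := fun v =>
      if h : ∃ x : {e // e ∈ EF} × Fin r, en x.1 x.2 = v ∧ c x = i then
        en h.choose.1 (nxt h.choose.2) else v
    have hpdef : ∀ v, p v = if h : ∃ x : {e // e ∈ EF} × Fin r, en x.1 x.2 = v ∧ c x = i then
        en h.choose.1 (nxt h.choose.2) else v := fun v => rfl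
    refine ⟨p, fun e a hea => ?_, fun y => ?_⟩
    · have h : ∃ x : {e // e ∈ EF} × Fin r, en x.1 x.2 = en e a ∧ c x = i := ⟨(e, a), rfl, hea⟩
      have hx := hc1 h.choose (e, a) h.choose_spec.1 (h.choose_spec.2.trans hea.symm)
      rw [hpdef, dif_pos h, hx]
    · have hsub : (Finset.univ.filter (fun v => p v = y)) ⊆
          {y} ∪ (EF.filter (fun e => y ∈ e)).biUnion id := by
        intro v hv
        have hv := (Finset.mem_filter.mp hv).2
        rw [hpdef] at hv
        split_ifs at hv with h
        · refine Finset.mem_union_right _ (Finset.mem_biUnion.mpr ⟨h.choose.1.1, ?_, ?_⟩)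
          · exact Finset.mem_filter.mpr ⟨h.choose.1.2, (hmem _ _).mpr ⟨_, hv⟩⟩
          · exact (hmem _ _).mpr ⟨_, h.choose_spec.1⟩
        · rw [hv]; exact Finset.mem_union_left _ (Finset.mem_singleton_self _)
      refine (Finset.card_le_card hsub).trans ((Finset.card_union_le _ _).trans ?_)
      refine add_le_add (by simp) (Finset.card_biUnion_le.trans ?_)
      refine (Finset.sum_le_card_nsmul _ _ r ?_).trans ?_
      · intro e he
        exact (hr e (Finset.mem_filter.mp he).1).le
      · rw [smul_eq_mul]; exact Nat.mul_le_mul_right _ (hΔ y)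
  choose p hpn hpR using hp
  choose cut τ hcut1 hcut2 hcut3 using fun i => exists_cut (p i) L (1 + Δ * r) hL (hpR i)
  refine ⟨fun x => τ x.1 x.2, fun x j => hcut3 x.1 x.2 j, fun e he => ?_⟩
  let A : Fin Δ × Fin L → Fin r → Prop := fun x a =>
    ¬ (c (⟨e, he⟩, a) = x.1 ∧ ¬ cut x.1 x.2 (en ⟨e, he⟩ a))
  refine ⟨fun x => (Finset.univ.filter (A x)).image (en ⟨e, he⟩), ?_, ?_⟩
  · have hcount : ∀ a, (Finset.univ.filter (fun x => A x a)).card ≤ (Δ - 1) * L + 1 := by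
      intro a
      have hsub : (Finset.univ.filter (fun x => A x a)) ⊆
          (Finset.univ.erase (c (⟨e, he⟩, a))) ×ˢ Finset.univ ∪
          (Finset.univ.filter (fun l => cut (c (⟨e, he⟩, a)) l (en ⟨e, he⟩ a))).image
            (fun l => (c (⟨e, he⟩, a), l)) := by
        rintro ⟨i, l⟩ hx
        have hx := (Finset.mem_filter.mp hx).2
        rw [Finset.mem_union, Finset.mem_product, Finset.mem_image]
        by_cases hi : c (⟨e, he⟩, a) = i
        · subst hi
          right
          refine ⟨l, ?_, rfl⟩
          simp only [A, true_and, not_not] at hx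
          simpa using hx
        · left
          simp [Ne.symm hi]
      refine (Finset.card_le_card hsub).trans ((Finset.card_union_le _ _).trans ?_)
      refine add_le_add ?_ (Finset.card_image_le.trans (Finset.card_le_one.mpr ?_))
      · rw [Finset.card_product, Finset.card_erase_of_mem (Finset.mem_univ _)]
        simp
      · intro l hl l' hl'
        exact hcut1 _ _ _ _ (Finset.mem_filter.mp hl).2 (Finset.mem_filter.mp hl').2
    calc ∑ x, ((Finset.univ.filter (A x)).image (en ⟨e, he⟩)).card
        ≤ ∑ x, (Finset.univ.filter (A x)).card := Finset.sum_le_sum (fun _ _ => Finset.card_image_le)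
      _ = ∑ a, (Finset.univ.filter (fun x => A x a)).card := by
          simp only [Finset.card_filter]
          exact Finset.sum_comm
      _ ≤ ∑ a : Fin r, ((Δ - 1) * L + 1) := Finset.sum_le_sum (fun a _ => hcount a)
      _ = _ := by simp
  · rintro ⟨i, l⟩ v hv
    obtain ⟨a, rfl⟩ := (hmem ⟨e, he⟩ v).mp hv
    suffices h : ∃ a', A (i, l) a' ∧ τ i l (en ⟨e, he⟩ a') = τ i l (en ⟨e, he⟩ a) by
      obtain ⟨a', h1, h2⟩ := h
      refine ⟨en ⟨e, he⟩ a', Finset.mem_image_of_mem _ (by simpa using h1), ?_⟩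
      dsimp only
      omega
    by_contra hcon
    have hcon : ∀ a', A (i, l) a' → τ i l (en ⟨e, he⟩ a') = τ i l (en ⟨e, he⟩ a) → False :=
      fun a' h1 h2 => hcon ⟨a', h1, h2⟩
    -- otherwise all vertices of the edge are omitted, so all have colour `i`
    have hall : ∀ k, τ i l (en ⟨e, he⟩ ⟨(a + k) % r, Nat.mod_lt _ (by omega)⟩)
        = τ i l (en ⟨e, he⟩ a) := by
      intro k
      induction k with
      | zero => congr 2; exact Fin.ext (Nat.mod_eq_of_lt a.2)
      | succ k ih =>
        have h1 : ¬ A (i, l) ⟨(a + k) % r, Nat.mod_lt _ (by omega)⟩ := fun h => hcon _ h ih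
        simp only [A, not_not] at h1
        have h2 := hpn i _ _ h1.1
        rw [← ih, ← hcut2 i l _ h1.2, h2]
        congr 2
        exact Fin.ext (by simp [nxt, add_assoc])
    obtain ⟨a', ha'⟩ := hc2 ⟨e, he⟩ i
    refine hcon a' (fun h => ha' h.1) ?_
    rw [← hall (a' + r - a)]
    congr 2
    refine Fin.ext ?_
    have := a.2
    have e1 : a.1 + (a'.1 + r - a.1) = a'.1 + r := by omega
    simp [e1, Nat.mod_eq_of_lt a'.2]

/-! ### Traversals by folding -/

/-- Enumerations of the edges in which every vertex occurs at most `q` times in each position. -/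
lemma exists_balanced_enumeration {r q n : ℕ} (hq : 1 ≤ q) (EF : Finset (Finset (Fin n)))
    (hr : ∀ e ∈ EF, e.card = r)
    (hΔ : ∀ v : Fin n, (EF.filter (fun e => v ∈ e)).card ≤ r * q) :
    ∃ en : {e // e ∈ EF} → Fin r → Fin n, (∀ e, Function.Injective (en e)) ∧
      (∀ e v, v ∈ e.1 ↔ ∃ a, en e a = v) ∧
      ∀ l v, (Finset.univ.filter (fun e => en e l = v)).card ≤ q := by
  classical
  obtain ⟨en, hinj, hmem⟩ := exists_enumeration EF hr
  have hinc := card_incidences_le hΔ hinj hmem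
  have hemb : ∀ v, Nonempty ({x : {e // e ∈ EF} × Fin r // en x.1 x.2 = v} ↪ Fin (r * q)) := by
    intro v
    refine Function.Embedding.nonempty_of_card_le ?_
    rw [Fintype.card_subtype, Fintype.card_fin]
    exact hinc v
  let g := fun v => (hemb v).some
  let rk : {e // e ∈ EF} × Fin r → ℕ := fun x => (g (en x.1 x.2) ⟨x, rfl⟩ : ℕ)
  have hrk : ∀ x y, en x.1 x.2 = en y.1 y.2 → rk x = rk y → x = y := by
    intro x y h1 h2
    have h3 : ∀ v (hx : en x.1 x.2 = v), rk x = g v ⟨x, hx⟩ := by rintro v rfl; rfl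
    have h4 := (h3 _ h1).symm.trans h2
    exact Subtype.mk.inj ((g _).injective (Fin.ext h4))
  have hrklt : ∀ x, rk x < r * q := fun x => (g (en x.1 x.2) ⟨x, rfl⟩).2
  let rkm : {e // e ∈ EF} × Fin r → Fin q := fun x => ⟨rk x % q, Nat.mod_lt _ hq⟩
  -- the incidences at each vertex are split into `q` groups of at most `r`; colouring with `r`
  -- colours so that each edge and each group is rainbow, the colours are the positions
  obtain ⟨c, hc⟩ := konig (X := {e // e ∈ EF} × Fin r) r (fun x => x.1)
    (fun x => (en x.1 x.2, rkm x))
    (by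
      intro e
      have : (Finset.univ.filter (fun x : {e // e ∈ EF} × Fin r => x.1 = e)).card
          ≤ (Finset.univ : Finset (Fin r)).card := by
        refine Finset.card_le_card_of_injOn (fun x => x.2) (fun _ _ => Finset.mem_coe.mpr (Finset.mem_univ _)) ?_
        intro x hx y hy h
        have hx := (Finset.mem_filter.mp (Finset.mem_coe.mp hx)).2
        have hy := (Finset.mem_filter.mp (Finset.mem_coe.mp hy)).2
        exact Prod.ext (hx.trans hy.symm) h
      simpa using this)
    (by
      rintro ⟨v, j⟩
      have : (Finset.univ.filter (fun x : {e // e ∈ EF} × Fin r => (en x.1 x.2, rkm x) = (v, j))).card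
          ≤ (Finset.range r).card := by
        refine Finset.card_le_card_of_injOn (fun x => rk x / q) ?_ ?_
        · intro x _
          rw [Finset.mem_coe, Finset.mem_range]
          exact Nat.div_lt_of_lt_mul ((hrklt x).trans_eq (mul_comm _ _))
        · intro x hx y hy h
          have hx := (Finset.mem_filter.mp (Finset.mem_coe.mp hx)).2
          have hy := (Finset.mem_filter.mp (Finset.mem_coe.mp hy)).2
          have hxy := Prod.mk.inj (hx.trans hy.symm)
          refine hrk x y hxy.1 ?_
          have h2 : rk x % q = rk y % q := congrArg Fin.val hxy.2
          have h : rk x / q = rk y / q := h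
          rw [← Nat.div_add_mod (rk x) q, h, h2, Nat.div_add_mod]
      simpa using this)
  have hbij : ∀ e, Function.Bijective (fun a => c (e, a)) := by
    intro e
    refine Finite.injective_iff_bijective.mp (fun a b h => ?_)
    by_contra hab
    exact hc (e, a) (e, b) (by simpa using hab) (Or.inl rfl) h
  let E := fun e => Equiv.ofBijective _ (hbij e)
  have hE : ∀ e l, c (e, (E e).symm l) = l := fun e l => (E e).apply_symm_apply l
  refine ⟨fun e l => en e ((E e).symm l), fun e => (hinj e).comp (E e).symm.injective, ?_, ?_⟩
  · intro e v
    rw [hmem]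
    exact ⟨fun ⟨a, ha⟩ => ⟨E e a, by simpa using ha⟩, fun ⟨l, hl⟩ => ⟨_, hl⟩⟩
  · intro l v
    have : (Finset.univ.filter (fun e => en e ((E e).symm l) = v)).card
        ≤ (Finset.univ : Finset (Fin q)).card := by
      refine Finset.card_le_card_of_injOn (fun e => rkm (e, (E e).symm l))
        (fun _ _ => Finset.mem_coe.mpr (Finset.mem_univ _)) ?_
      intro e he e' he' h
      have he := (Finset.mem_filter.mp (Finset.mem_coe.mp he)).2
      have he' := (Finset.mem_filter.mp (Finset.mem_coe.mp he')).2
      by_contra hne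
      refine hc (e, (E e).symm l) (e', (E e').symm l) (fun h => hne (Prod.mk.inj h).1)
        (Or.inr (Prod.ext (he.trans he'.symm) h)) ?_
      rw [hE, hE]
    simpa using this

/-- A partial injection of a finite type, given as a set of arcs, extends to an injection. -/
lemma exists_injective_extension {X V : Type} [Fintype V] [DecidableEq V] (P : Set X)
    (s t : X → V) (hs : Set.InjOn s P) (ht : Set.InjOn t P) :
    ∃ p : V → V, Function.Injective p ∧ ∀ x ∈ P, p (s x) = t x := by
  classical
  let f : {v // v ∈ s '' P} ≃ {v // v ∈ t '' P} :=
    (Equiv.Set.imageOfInjOn s P hs).symm.trans (Equiv.Set.imageOfInjOn t P ht)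
  refine ⟨f.extendSubtype, f.extendSubtype.injective, fun x hx => ?_⟩
  have h := f.extendSubtype_apply_of_mem (s x) (Set.mem_image_of_mem s hx)
  refine h.trans ?_
  have h2 : (⟨s x, Set.mem_image_of_mem s hx⟩ : {v // v ∈ s '' P})
      = Equiv.Set.imageOfInjOn s P hs ⟨x, hx⟩ := rfl
  simp only [f, h2, Equiv.trans_apply, Equiv.symm_apply_apply]
  rfl

/-- Traversals by folding: each colour class of arcs is part of a permutation, whose cycles are
folded. -/
lemma traversals_fold {h q n : ℕ} (hh : 1 ≤ h) (hq : 1 ≤ q)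
    (EF : Finset (Finset (Fin n))) (hr : ∀ e ∈ EF, e.card = 2 * h + 1)
    (hΔ : ∀ v : Fin n, (EF.filter (fun e => v ∈ e)).card ≤ (2 * h + 1) * q) :
    ∃ τ : Fin (q * (h + 1)) → Fin n → ℕ,
        (∀ i j, (Finset.univ.filter (fun v => τ i v = j)).card ≤ 2) ∧
        ∀ e ∈ EF, ∃ S : Fin (q * (h + 1)) → Finset (Fin n),
          ∑ i, (S i).card ≤ (2 * h + 1) * (q * (h + 1)) - (h + 1) ∧
          ∀ i, ∀ v ∈ e, ∃ s ∈ S i, τ i v ≤ τ i s + 1 ∧ τ i s ≤ τ i v + 1 := by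
  classical
  obtain ⟨en, hinj, hmem, hbal⟩ := exists_balanced_enumeration hq EF hr hΔ
  have hcnt : ∀ (f : Fin (h + 1) → Fin (2 * h + 1)) v,
      (Finset.univ.filter (fun y : {e // e ∈ EF} × Fin (h + 1) => en y.1 (f y.2) = v)).card
        ≤ q * (h + 1) := by
    intro f v
    have hsub : (Finset.univ.filter (fun y : {e // e ∈ EF} × Fin (h + 1) => en y.1 (f y.2) = v))
        ⊆ Finset.univ.biUnion (fun j : Fin (h + 1) =>
          (Finset.univ.filter (fun e => en e (f j) = v)).image (fun e => (e, j))) := by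
      rintro ⟨e, j⟩ hy
      have hy := (Finset.mem_filter.mp hy).2
      refine Finset.mem_biUnion.mpr ⟨j, Finset.mem_univ _, Finset.mem_image.mpr ⟨e, ?_, rfl⟩⟩
      simpa using hy
    refine (Finset.card_le_card hsub).trans (Finset.card_biUnion_le.trans ?_)
    refine (Finset.sum_le_card_nsmul _ _ q (fun j _ => Finset.card_image_le.trans (hbal _ _))).trans ?_
    simp [mul_comm]
  -- arc `0` runs from position `0` to `1`, arc `j ≥ 1` from `2 j - 1` to `2 j`; the truncated
  -- subtraction gives the correct tail `0` of arc `0`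
  let tl : Fin (h + 1) → Fin (2 * h + 1) := fun j => ⟨2 * j - 1, by omega⟩
  let hd : Fin (h + 1) → Fin (2 * h + 1) := fun j => ⟨if j.1 = 0 then 1 else 2 * j, by
    split_ifs <;> omega⟩
  -- the end of the arc made redundant, always in an even position, and the other end, always in an
  -- odd position and hence never omitted
  let rm : Fin (h + 1) → Fin (2 * h + 1) := fun j => ⟨2 * j, by omega⟩
  let pt : Fin (h + 1) → Fin (2 * h + 1) := fun j => ⟨if j.1 = 0 then 1 else 2 * j - 1, by
    split_ifs <;> omega⟩
  have hends : ∀ j, (rm j = tl j ∧ pt j = hd j) ∨ (rm j = hd j ∧ pt j = tl j) := by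
    intro j
    by_cases hj : j.1 = 0
    · left; constructor <;> apply Fin.ext <;> simp [rm, tl, pt, hd, hj]
    · right; constructor <;> apply Fin.ext <;> simp [rm, tl, pt, hd, hj]
  have hrmpt : ∀ j j', rm j' ≠ pt j := by
    intro j j' hc
    have hc := congrArg Fin.val hc
    simp only [rm, pt] at hc
    split_ifs at hc <;> omega
  have hrminj : Function.Injective rm := fun a b hab => by
    have := congrArg Fin.val hab
    simp only [rm] at this
    exact Fin.ext (by omega)
  obtain ⟨c, hc⟩ := konig (X := {e // e ∈ EF} × Fin (h + 1)) (q * (h + 1))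
    (fun y => en y.1 (tl y.2)) (fun y => en y.1 (hd y.2)) (hcnt tl) (hcnt hd)
  have hp : ∀ i, ∃ p : Fin n → Fin n, Function.Injective p ∧
      ∀ y ∈ {y | c y = i}, p (en y.1 (tl y.2)) = en y.1 (hd y.2) := by
    intro i
    refine exists_injective_extension {y | c y = i} (fun y => en y.1 (tl y.2))
      (fun y => en y.1 (hd y.2)) ?_ ?_
    · intro x hx y hy hxy
      by_contra hne
      exact hc x y hne (Or.inl hxy) (Eq.trans hx (Eq.symm hy))
    · intro x hx y hy hxy
      by_contra hne
      exact hc x y hne (Or.inr hxy) (Eq.trans hx (Eq.symm hy))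
  choose p hpi hpn using hp
  choose τ hτ1 hτ2 using fun i => exists_fold (p i) (hpi i)
  refine ⟨τ, hτ1, fun e he => ?_⟩
  let R : Fin (q * (h + 1)) → Finset (Fin (2 * h + 1)) := fun i =>
    (Finset.univ.filter (fun j => c (⟨e, he⟩, j) = i)).image rm
  refine ⟨fun i => (R i)ᶜ.image (en ⟨e, he⟩), ?_, ?_⟩
  · have h1 : ∑ i, (R i).card = h + 1 := by
      have := Finset.card_eq_sum_card_fiberwise (s := (Finset.univ : Finset (Fin (h + 1))))
        (t := Finset.univ) (f := fun j => c (⟨e, he⟩, j)) (fun _ _ => by simp)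
      rw [Finset.card_univ, Fintype.card_fin] at this
      exact (Finset.sum_congr rfl (fun i _ => Finset.card_image_of_injective _ hrminj)).trans this.symm
    have h2 : ∑ i, ((R i)ᶜ.image (en ⟨e, he⟩)).card + ∑ i, (R i).card
        ≤ (2 * h + 1) * (q * (h + 1)) := by
      rw [← Finset.sum_add_distrib]
      refine (Finset.sum_le_card_nsmul _ _ (2 * h + 1) (fun i _ => ?_)).trans ?_
      · refine (Nat.add_le_add_right Finset.card_image_le _).trans ?_
        rw [Finset.card_compl_add_card]
        simp
      · simp [mul_comm]
    dsimp only
    omega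
  · intro i v hv
    obtain ⟨a, rfl⟩ := (hmem ⟨e, he⟩ v).mp hv
    by_cases ha : a ∈ R i
    · obtain ⟨j, hj, rfl⟩ := Finset.mem_image.mp ha
      have hj : c (⟨e, he⟩, j) = i := (Finset.mem_filter.mp hj).2
      refine ⟨en ⟨e, he⟩ (pt j), Finset.mem_image_of_mem _ ?_, ?_⟩
      · rw [Finset.mem_compl]
        intro hmem'
        obtain ⟨j', _, hj'⟩ := Finset.mem_image.mp hmem'
        exact hrmpt j j' hj'
      · have h1 := hpn i (⟨e, he⟩, j) hj
        have h2 := hτ2 i (en ⟨e, he⟩ (tl j))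
        dsimp only at h1
        rw [h1] at h2
        rcases hends j with ⟨e1, e2⟩ | ⟨e1, e2⟩
        · rw [e1, e2]; exact ⟨h2.2, h2.1⟩
        · rw [e1, e2]; exact h2
    · exact ⟨en ⟨e, he⟩ a, Finset.mem_image_of_mem _ (Finset.mem_compl.mpr ha), by omega, by omega⟩

/-! ### The two cases -/

/-- The theorem when `r D` exceeds `(r + 1) Δ`. With `L = r D`, the exponent is
`r - (r D - 1) / (Δ D)`. -/
lemma universal_cut (r Δ D : ℕ) (hr : 3 ≤ r) (hΔ : 2 ≤ Δ) (hD : (r + 1) * Δ + 1 ≤ r * D) :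
    ∃ C : ℝ, 0 < C ∧ ∀ n : ℕ, 1 ≤ n →
      ∃ (M : ℕ) (EH : Finset (Finset (Fin M))),
        (∀ e ∈ EH, e.card = r) ∧ (M : ℝ) ≤ C * n ∧
        (EH.card : ℝ) ≤ C * (n : ℝ) ^ ((r : ℝ) - (r + 1 : ℝ) / (D : ℝ)) ∧
        HypergraphUniversal r n Δ M EH := by
  obtain ⟨L, hL⟩ : ∃ L, L = r * D := ⟨_, rfl⟩
  have hL1 : 1 ≤ L := by omega
  have hD0 : 0 < D := by
    rcases Nat.eq_zero_or_pos D with h | h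
    · subst h; omega
    · exact h
  refine universal_of_traversals r Δ (Δ * L) (r * ((Δ - 1) * L + 1))
    (∑ k ∈ Finset.range (2 * L + 2), (1 + Δ * r) ^ k) (Nat.mul_pos (by omega) hL1) ?_ _ ?_ ?_
  · have : 0 ∈ Finset.range (2 * L + 2) := by simp
    exact le_trans (by simp) (Finset.single_le_sum (f := fun k => (1 + Δ * r) ^ k)
      (fun _ _ => Nat.zero_le _) this)
  · have hΔR : (2 : ℝ) ≤ Δ := by exact_mod_cast hΔ
    have hDR : (0 : ℝ) < D := by exact_mod_cast hD0
    have hrR : (3 : ℝ) ≤ r := by exact_mod_cast hr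
    have hDR' : ((r : ℝ) + 1) * Δ + 1 ≤ r * D := by exact_mod_cast hD
    subst hL
    push_cast [Nat.cast_sub (show 1 ≤ Δ by omega)]
    have hpos : (0 : ℝ) < Δ * (r * D) := by positivity
    rw [div_le_iff₀ hpos]
    have e1 : ((r : ℝ) - (r + 1) / D) * (Δ * (r * D)) = r * (Δ * (r * D)) - (r + 1) * Δ * r := by
      field_simp
    rw [e1]
    nlinarith
  · intro n EF h1 h2
    obtain ⟨τ, hτ, hS⟩ := traversals_cut L hr hΔ hL1 EF h1 h2
    refine ⟨fun i => τ (finProdFinEquiv.symm i), fun i j => hτ _ j, fun e he => ?_⟩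
    obtain ⟨S, hS1, hS2⟩ := hS e he
    refine ⟨fun i => S (finProdFinEquiv.symm i), ?_, fun i => hS2 _⟩
    rw [Equiv.sum_comp finProdFinEquiv.symm (fun i => (S i).card)]
    exact hS1

/-- The theorem for `r = 2 h + 1` and `Δ = r q`, where `(r + 1) Δ / r` is the integer `(r + 1) q`. -/
lemma universal_fold (h q : ℕ) (hh : 1 ≤ h) (hq : 1 ≤ q) :
    ∃ C : ℝ, 0 < C ∧ ∀ n : ℕ, 1 ≤ n →
      ∃ (M : ℕ) (EH : Finset (Finset (Fin M))),
        (∀ e ∈ EH, e.card = 2 * h + 1) ∧ (M : ℝ) ≤ C * n ∧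
        (EH.card : ℝ) ≤ C * (n : ℝ) ^ (((2 * h + 1 : ℕ) : ℝ)
          - ((2 * h + 1 : ℕ) + 1 : ℝ) / (((2 * h + 2) * q : ℕ) : ℝ)) ∧
        HypergraphUniversal (2 * h + 1) n ((2 * h + 1) * q) M EH := by
  refine universal_of_traversals (2 * h + 1) ((2 * h + 1) * q) (q * (h + 1))
    ((2 * h + 1) * (q * (h + 1)) - (h + 1)) 2 (Nat.mul_pos hq (by omega)) (by omega) _ ?_
    (fun n EF h1 h2 => traversals_fold hh hq EF h1 h2)
  have hle : h + 1 ≤ (2 * h + 1) * (q * (h + 1)) :=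
    (Nat.le_mul_of_pos_left _ hq).trans (Nat.le_mul_of_pos_left _ (by omega))
  have hqR : (0 : ℝ) < q := by exact_mod_cast hq
  refine le_of_eq ?_
  push_cast [Nat.cast_sub hle]
  field_simp
  ring

end UnivHyp

/-- for odd `r ≥ 3` and `Δ ≥ 2`, with `Δ' = ⌈(r+1)Δ/r⌉`, there are
`𝓕^(r)(n,Δ)`-universal `r`-uniform hypergraphs with at most `C·n` vertices and at most
`C·n^{r-(r+1)/Δ'}` edges. -/
theorem universal_odd_uniformity (r Δ : ℕ) (hr : 3 ≤ r) (hro : Odd r) (hΔ : 2 ≤ Δ)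
    (Δ' : ℕ) (hΔ' : Δ' = ⌈((r + 1 : ℚ) * Δ) / r⌉₊) :
    ∃ C : ℝ, 0 < C ∧ ∀ n : ℕ, 1 ≤ n →
      ∃ (N : ℕ) (EH : Finset (Finset (Fin N))),
        (∀ e ∈ EH, e.card = r) ∧
        (N : ℝ) ≤ C * n ∧
        (EH.card : ℝ) ≤ C * (n : ℝ) ^ ((r : ℝ) - (r + 1 : ℝ) / (Δ' : ℝ)) ∧
        HypergraphUniversal r n Δ N EH := by
  have hle : (r + 1) * Δ ≤ r * Δ' := by
    have h1 : ((r + 1 : ℚ) * Δ) / r ≤ Δ' := hΔ' ▸ Nat.le_ceil _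
    have hr0 : (0 : ℚ) < r := by exact_mod_cast (show 0 < r by omega)
    rw [div_le_iff₀ hr0] at h1
    have h2 : (r + 1) * Δ ≤ Δ' * r := by exact_mod_cast h1
    linarith
  rcases hle.lt_or_eq with hlt | heq
  · exact UnivHyp.universal_cut r Δ Δ' hr hΔ hlt
  · obtain ⟨h, rfl⟩ := hro
    have hdvd : (2 * h + 1) ∣ Δ :=
      (Nat.Coprime.dvd_of_dvd_mul_left (by simp) (Dvd.intro _ heq.symm))
    obtain ⟨q, rfl⟩ := hdvd
    have hΔq : Δ' = (2 * h + 2) * q := by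
      have : (2 * h + 1) * Δ' = (2 * h + 1) * ((2 * h + 2) * q) := by rw [← heq]; ring
      exact Nat.eq_of_mul_eq_mul_left (by omega) this
    have hq : 1 ≤ q := by
      rcases Nat.eq_zero_or_pos q with h0 | h0
      · subst h0; omega
      · exact h0
    rw [hΔq]
    exact UnivHyp.universal_fold h q (by omega) hq
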